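/- arXiv:2404.12568 — 2 statements merged into one kernel-verified Lean document; each statement's English description precedes it below -/
import Mathlib

section
/- Let Ũ_m ∈ ℝ^{M×m} and Ṽ_m ∈ ℝ^{N×m} have orthonormal columns, and let P̃_m ∈ ℝ^{M×(M−m)} and Q̃_m ∈ ℝ^{N×(N−m)} be such that [Ũ_m, P̃_m] ∈ ℝ^{M×M} and [Ṽ_m, Q̃_m] ∈ ℝ^{N×N} are orthogonal matrices. Define B̃_m' = [[−τ I_{M−m}, P̃_mᵀ A Q̃_m], [Q̃_mᵀ Aᵀ P̃_m, −τ I_{N−m}]] and B_m' = [[−τ I_{M−m}, Σ_m'], [Σ_m'ᵀ, −τ I_{N−m}]], where Σ_m' ∈ ℝ^{(M−m)×(N−m)} is rectangular diagonal with diagonal entries σ_{m+1}, …, σ_N, and set ‖sin Φ‖ = ‖P̃_mᵀ U_m‖ and ‖sin Ψ‖ = ‖Q̃_mᵀ V_m‖. Then there exists an orthogonal matrix Z ∈ ℝ^{(M+N−2m)×(M+N−2m)} such that ‖B̃_m' − Zᵀ B_m' Z‖ ≤ ‖A‖ · (‖sin Φ‖ + ‖sin Ψ‖)². -/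
open Matrix

noncomputable def specNorm {ι κ : Type*} [Fintype ι] [Fintype κ] [DecidableEq κ]
    (A : Matrix ι κ ℝ) : ℝ :=
  ‖LinearMap.toContinuousLinearMap (Matrix.toEuclideanLin A)‖

/-!
Let `U₁`, `U₂` be the first `m` and the remaining columns of `U`, and likewise `V₁`, `V₂`; write
`a = ‖Pᴴ U₁‖` and `b = ‖Qᴴ V₁‖`. As `U` is unitary and `P` is an isometry, `C = U₂ᴴ P` satisfies
`1 - Cᴴ C = (U₁ᴴ P)ᴴ (U₁ᴴ P)`, which has norm `a²`. The unitary polar factor `Z` of `C` satisfies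
`‖C - Z‖ = ‖1 - |C|‖ ≤ ‖1 - |C|²‖`, so it is within `a²` of `C`; in the same way the polar factor
`W` of `V₂ᴴ Q` is within `b²` of `V₂ᴴ Q`. Since `A` is block diagonal with respect to these
splittings, with blocks `S_i = U_iᴴ A V_i`, the difference `Pᴴ A Q - Zᴴ S₂ W` consists of
`(U₁ᴴ P)ᴴ S₁ (V₁ᴴ Q)`, of size at most `‖A‖ a b`, and of the two errors made in replacing `U₂ᴴ P`
and `V₂ᴴ Q` by `Z` and `W`, of size at most `‖A‖ a²` and `‖A‖ b²`. This difference and its adjoint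
are the only nonzero blocks that remain after conjugating by `diag(Z, W)`.
-/

open scoped Matrix.Norms.L2Operator MatrixOrder

lemma specNorm_eq_norm {ι κ : Type*} [Fintype ι] [Fintype κ] [DecidableEq κ] (A : Matrix ι κ ℝ) :
    specNorm A = ‖A‖ := rfl

section PolarFactor

lemma exists_linearIsometry_apply_eq {𝕜 E V : Type*} [RCLike 𝕜] [AddCommGroup E] [Module 𝕜 E]
    [NormedAddCommGroup V] [InnerProductSpace 𝕜 V] [FiniteDimensional 𝕜 V]
    (f g : E →ₗ[𝕜] V) (h : ∀ x, ‖f x‖ = ‖g x‖) :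
    ∃ L : V →ₗᵢ[𝕜] V, ∀ x, L (f x) = g x := by
  have ker_le : f.ker ≤ g.ker := fun x hx => by
    rw [LinearMap.mem_ker, ← norm_eq_zero, ← h, hx, norm_zero]
  let onRange : f.range →ₗ[𝕜] V := f.ker.liftQ g ker_le ∘ₗ f.quotKerEquivRange.symm
  have onRange_apply (x : E) : onRange (f.rangeRestrict x) = g x := by
    have : f.quotKerEquivRange.symm (f.rangeRestrict x) = f.ker.mkQ x :=
      f.quotKerEquivRange_symm_apply_image x _
    simp [onRange, this]
  have norm_onRange (y : f.range) : ‖onRange y‖ = ‖y‖ := by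
    obtain ⟨x, rfl⟩ := f.surjective_rangeRestrict y
    rw [onRange_apply, ← h]
    rfl
  let L : f.range →ₗᵢ[𝕜] V := ⟨onRange, norm_onRange⟩
  exact ⟨L.extend, fun x => (L.extend_apply (f.rangeRestrict x)).trans (onRange_apply x)⟩

lemma norm_one_sub_le_norm_one_sub_mul_self {A : Type*} [NormedRing A] [StarRing A]
    [NormedAlgebra ℝ A] [PartialOrder A] [StarOrderedRing A] [NonnegSpectrumClass ℝ A]
    [IsometricContinuousFunctionalCalculus ℝ A IsSelfAdjoint] {a : A} (ha : 0 ≤ a) :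
    ‖1 - a‖ ≤ ‖1 - a * a‖ := by
  have hsa : IsSelfAdjoint a := .of_nonneg ha
  have hsub : cfc (fun t : ℝ => 1 - t) a = 1 - a := by
    rw [cfc_sub .., cfc_const_one .., cfc_id' ..]
  have hsub_sq : cfc (fun t : ℝ => 1 - t * t) a = 1 - a * a := by
    rw [cfc_sub .., cfc_const_one .., cfc_mul .., cfc_id' ..]
  have norm_one_sub_le (t : ℝ) (ht : t ∈ spectrum ℝ a) :
      ‖1 - t‖ ≤ ‖cfc (fun t : ℝ => 1 - t * t) a‖ := by
    have ht0 : 0 ≤ t := spectrum_nonneg_of_nonneg ha ht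
    calc ‖1 - t‖ ≤ ‖1 - t‖ * ‖1 + t‖ := by
          refine le_mul_of_one_le_right (norm_nonneg _) ?_
          rw [Real.norm_of_nonneg (by positivity)]
          linarith
      _ = ‖1 - t * t‖ := by rw [← norm_mul]; ring_nf
      _ ≤ ‖cfc (fun t : ℝ => 1 - t * t) a‖ := norm_apply_le_norm_cfc (fun t : ℝ => 1 - t * t) a ht
  rw [← hsub, ← hsub_sq]
  exact norm_cfc_le (norm_nonneg _) norm_one_sub_le

variable {𝕜 m n : Type*} [RCLike 𝕜] [Fintype m]

lemma exists_mem_unitaryGroup_mul_eq [DecidableEq m] [Finite n] {A B : Matrix m n 𝕜}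
    (h : Aᴴ * A = Bᴴ * B) : ∃ Z ∈ unitaryGroup m 𝕜, Z * A = B := by
  classical
  have := Fintype.ofFinite n
  have norm_sq (C : Matrix m n 𝕜) (x : EuclideanSpace 𝕜 n) :
      ‖toEuclideanLin C x‖ ^ 2 = RCLike.re (inner 𝕜 (toEuclideanLin (Cᴴ * C) x) x) := by
    rw [toLpLin_mul_same, toEuclideanLin_conjTranspose_eq_adjoint, LinearMap.comp_apply,
      LinearMap.adjoint_inner_left, inner_self_eq_norm_sq]
  obtain ⟨L, hL⟩ := exists_linearIsometry_apply_eq (toEuclideanLin A) (toEuclideanLin B)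
    fun x => (sq_eq_sq₀ (norm_nonneg _) (norm_nonneg _)).mp (by rw [norm_sq, norm_sq, h])
  refine ⟨toEuclideanLin.symm L.toLinearMap,
    mem_unitaryGroup_iff'.mpr (toEuclideanLin.injective ?_), toEuclideanLin.injective ?_⟩
  · rw [star_eq_conjTranspose, toLpLin_mul_same, toEuclideanLin_conjTranspose_eq_adjoint,
      LinearEquiv.apply_symm_apply, toLpLin_one, L.adjoint_comp_self']
  · ext1 x
    rw [toLpLin_mul_same, LinearEquiv.apply_symm_apply]
    exact hL x

variable [Fintype n] [DecidableEq n]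

lemma exists_mem_unitaryGroup_mul_abs_eq (C : Matrix n n 𝕜) :
    ∃ Z ∈ unitaryGroup n 𝕜, Z * CFC.abs C = C :=
  exists_mem_unitaryGroup_mul_eq <| by
    rw [← star_eq_conjTranspose, (CFC.abs_nonneg C).isSelfAdjoint.star_eq, CFC.abs_mul_abs,
      star_eq_conjTranspose]

lemma exists_mem_unitaryGroup_norm_sub_le (C : Matrix n n 𝕜) :
    ∃ Z ∈ unitaryGroup n 𝕜, ‖C - Z‖ ≤ ‖1 - Cᴴ * C‖ := by
  obtain ⟨Z, hZ, hC⟩ := exists_mem_unitaryGroup_mul_abs_eq C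
  refine ⟨Z, hZ, ?_⟩
  -- The functional calculus is over `ℝ`, but the norm instance on matrices is only over `𝕜`.
  let _ : NormedAlgebra ℝ (Matrix n n 𝕜) :=
    ⟨fun r A => by rw [← algebraMap_smul 𝕜 r A, norm_smul, norm_algebraMap']⟩
  calc ‖C - Z‖ = ‖Z * (1 - CFC.abs C)‖ := by rw [mul_sub, hC, mul_one, norm_sub_rev]
    _ = ‖1 - CFC.abs C‖ := CStarRing.norm_mem_unitary_mul _ hZ
    _ ≤ ‖1 - CFC.abs C * CFC.abs C‖ := norm_one_sub_le_norm_one_sub_mul_self (CFC.abs_nonneg C)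
    _ = ‖1 - Cᴴ * C‖ := by rw [CFC.abs_mul_abs, star_eq_conjTranspose]

lemma exists_mem_unitaryGroup_norm_sub_le_sq {R₁ : Matrix m n 𝕜} {R₂ : Matrix n n 𝕜}
    (h : R₁ᴴ * R₁ + R₂ᴴ * R₂ = 1) :
    ∃ Z ∈ unitaryGroup n 𝕜, ‖R₂ - Z‖ ≤ ‖R₁‖ ^ 2 := by
  obtain ⟨Z, hZ, hle⟩ := exists_mem_unitaryGroup_norm_sub_le R₂
  refine ⟨Z, hZ, hle.trans_eq ?_⟩
  rw [← h, add_sub_cancel_right, l2_opNorm_conjTranspose_mul_self, sq]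

end PolarFactor

section OperatorNorm

variable {𝕜 k l m n : Type*} [RCLike 𝕜] [Fintype k] [Fintype l] [Fintype m] [Fintype n]
  [DecidableEq n]

lemma l2_opNorm_mul_mul_le [DecidableEq l] [DecidableEq m] (X : Matrix k l 𝕜) (Y : Matrix l m 𝕜)
    (Z : Matrix m n 𝕜) : ‖X * Y * Z‖ ≤ ‖X‖ * ‖Y‖ * ‖Z‖ := by
  grw [l2_opNorm_mul, l2_opNorm_mul]

lemma l2_opNorm_le_one_of_conjTranspose_mul_self_eq_one {X : Matrix m n 𝕜} (h : Xᴴ * X = 1) :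
    ‖X‖ ≤ 1 := by
  have one_le : ‖(1 : Matrix n n 𝕜)‖ ≤ 1 := IsStarProjection.norm_le _ (.one _)
  rw [← h, l2_opNorm_conjTranspose_mul_self, ← sq] at one_le
  exact (sq_le_one_iff₀ (norm_nonneg X)).mp one_le

lemma l2_opNorm_le_one_of_conjTranspose_mul_self_add_eq_one {X : Matrix l n 𝕜} {Y : Matrix m n 𝕜}
    (h : Xᴴ * X + Yᴴ * Y = 1) : ‖X‖ ≤ 1 := by
  classical
  have norm_stack : ‖fromRows X Y‖ ≤ 1 := l2_opNorm_le_one_of_conjTranspose_mul_self_eq_one <| by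
    rw [conjTranspose_fromRows_eq_fromCols_conjTranspose, fromCols_mul_fromRows, h]
  let E : Matrix (l ⊕ m) l 𝕜 := fromRows 1 0
  have hE : Eᴴ = fromCols 1 0 := by
    simp [E, conjTranspose_fromRows_eq_fromCols_conjTranspose]
  have norm_E : ‖E‖ ≤ 1 := l2_opNorm_le_one_of_conjTranspose_mul_self_eq_one <| by
    rw [hE, fromCols_mul_fromRows, Matrix.one_mul, Matrix.zero_mul, add_zero]
  calc ‖X‖ = ‖Eᴴ * fromRows X Y‖ := by
        rw [hE, fromCols_mul_fromRows, Matrix.one_mul, Matrix.zero_mul, add_zero]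
    _ ≤ ‖E‖ * ‖fromRows X Y‖ := (l2_opNorm_mul _ _).trans_eq (by rw [l2_opNorm_conjTranspose])
    _ ≤ 1 := mul_le_one₀ norm_E (norm_nonneg _) norm_stack

lemma l2_opNorm_le_one_of_mul_conjTranspose_add_eq_one [DecidableEq l]
    {X : Matrix n l 𝕜} {Y : Matrix n m 𝕜} (h : X * Xᴴ + Y * Yᴴ = 1) : ‖X‖ ≤ 1 := by
  rw [← l2_opNorm_conjTranspose]
  exact l2_opNorm_le_one_of_conjTranspose_mul_self_add_eq_one (Y := Yᴴ) (by simpa using h)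

lemma l2_opNorm_conjTranspose_mul_mul_le [DecidableEq k] [DecidableEq m]
    {X : Matrix l k 𝕜} {Z : Matrix m n 𝕜} (hX : ‖X‖ ≤ 1) (hZ : ‖Z‖ ≤ 1) (Y : Matrix l m 𝕜) :
    ‖Xᴴ * Y * Z‖ ≤ ‖Y‖ := by
  classical
  calc ‖Xᴴ * Y * Z‖ ≤ ‖X‖ * ‖Y‖ * ‖Z‖ := by
        rw [← l2_opNorm_conjTranspose X]
        exact l2_opNorm_mul_mul_le _ _ _
    _ ≤ 1 * ‖Y‖ * 1 := by gcongr
    _ = ‖Y‖ := by ring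

lemma l2_opNorm_fromBlocks_zero₁₁_zero₂₂_le [DecidableEq m] (X : Matrix k n 𝕜) (Y : Matrix l m 𝕜) :
    ‖fromBlocks 0 X Y 0‖ ≤ max ‖X‖ ‖Y‖ := by
  refine ContinuousLinearMap.opNorm_le_bound _ (by positivity) fun x => ?_
  let x₁ : EuclideanSpace 𝕜 m := WithLp.toLp 2 fun i => x (Sum.inl i)
  let x₂ : EuclideanSpace 𝕜 n := WithLp.toLp 2 fun i => x (Sum.inr i)
  have norm_x : ‖x‖ ^ 2 = ‖x₂‖ ^ 2 + ‖x₁‖ ^ 2 := by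
    simp [EuclideanSpace.norm_sq_eq, x₁, x₂, add_comm]
  refine le_of_sq_le_sq ?_ (by positivity)
  calc ‖toEuclideanLin (fromBlocks 0 X Y 0) x‖ ^ 2
      = ‖toEuclideanLin X x₂‖ ^ 2 + ‖toEuclideanLin Y x₁‖ ^ 2 := by
        simp [EuclideanSpace.norm_sq_eq, x₁, x₂, mulVec, dotProduct]
    _ ≤ (‖X‖ * ‖x₂‖) ^ 2 + (‖Y‖ * ‖x₁‖) ^ 2 := by
        gcongr
        · exact l2_opNorm_mulVec X x₂
        · exact l2_opNorm_mulVec Y x₁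
    _ ≤ (max ‖X‖ ‖Y‖ * ‖x₂‖) ^ 2 + (max ‖X‖ ‖Y‖ * ‖x₁‖) ^ 2 := by
        gcongr
        · exact le_max_left _ _
        · exact le_max_right _ _
    _ = (max ‖X‖ ‖Y‖ * ‖x‖) ^ 2 := by rw [mul_pow _ ‖x‖, norm_x]; ring

end OperatorNorm

section Augmented

variable {R m n : Type*} [DecidableEq m] [DecidableEq n]

/-- The augmented (Jordan–Wielandt) matrix of `X` with its two zero diagonal blocks replaced by the
scalar blocks `c` and `d`; the matrices `B̃_m'` and `B_m'` are of this form with `c = d = -τ`. -/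
def augmented [Semiring R] [StarRing R] (c d : R) (X : Matrix m n R) : Matrix (m ⊕ n) (m ⊕ n) R :=
  fromBlocks (c • 1) X Xᴴ (d • 1)

variable [Fintype m] [Fintype n]

lemma fromBlocks_diagonal_conjTranspose_mul_self_eq_one [Semiring R] [StarRing R]
    {Z : Matrix m m R} {W : Matrix n n R} (hZ : Zᴴ * Z = 1) (hW : Wᴴ * W = 1) :
    (fromBlocks Z 0 0 W)ᴴ * fromBlocks Z 0 0 W = 1 := by
  simp [fromBlocks_conjTranspose, fromBlocks_multiply, hZ, hW]

lemma augmented_sub_conj_augmented [CommRing R] [StarRing R] (c d : R) (X Y : Matrix m n R)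
    {Z : Matrix m m R} {W : Matrix n n R} (hZ : Zᴴ * Z = 1) (hW : Wᴴ * W = 1) :
    augmented c d X - (fromBlocks Z 0 0 W)ᴴ * augmented c d Y * fromBlocks Z 0 0 W =
      fromBlocks 0 (X - Zᴴ * Y * W) (X - Zᴴ * Y * W)ᴴ 0 := by
  simp [augmented, fromBlocks_conjTranspose, fromBlocks_multiply, sub_eq_add_neg,
    fromBlocks_neg, fromBlocks_add, hZ, hW, Matrix.mul_assoc]

lemma norm_augmented_sub_conj_augmented_le {𝕜 : Type*} [RCLike 𝕜] (c d : 𝕜)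
    (X Y : Matrix m n 𝕜) {Z : Matrix m m 𝕜} {W : Matrix n n 𝕜} (hZ : Zᴴ * Z = 1) (hW : Wᴴ * W = 1) :
    ‖augmented c d X - (fromBlocks Z 0 0 W)ᴴ * augmented c d Y * fromBlocks Z 0 0 W‖ ≤
      ‖X - Zᴴ * Y * W‖ := by
  rw [augmented_sub_conj_augmented c d X Y hZ hW]
  refine (l2_opNorm_fromBlocks_zero₁₁_zero₂₂_le _ _).trans_eq ?_
  rw [l2_opNorm_conjTranspose, max_self]

end Augmented

section BlockDecomposition

variable {R μ ν ι₁ ι₂ κ₁ κ₂ : Type*} [Semiring R] [StarRing R] [Fintype μ] [DecidableEq μ]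
  [Fintype ι₁] [Fintype ι₂]

lemma conjTranspose_mul_self_add_of_mul_conjTranspose_add {U₁ : Matrix μ ι₁ R} {U₂ : Matrix μ ι₂ R}
    {P : Matrix μ κ₁ R} [DecidableEq κ₁] (hU : U₁ * U₁ᴴ + U₂ * U₂ᴴ = 1) (hP : Pᴴ * P = 1) :
    (U₁ᴴ * P)ᴴ * (U₁ᴴ * P) + (U₂ᴴ * P)ᴴ * (U₂ᴴ * P) = 1 := by
  calc _ = Pᴴ * (U₁ * U₁ᴴ + U₂ * U₂ᴴ) * P := by
        simp only [conjTranspose_mul, conjTranspose_conjTranspose, Matrix.mul_add, Matrix.add_mul,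
          Matrix.mul_assoc]
    _ = 1 := by rw [hU, Matrix.mul_one, hP]

variable [Fintype ν] [DecidableEq ν] [Fintype κ₁] [Fintype κ₂]

lemma eq_add_of_conjTranspose_mul_mul_eq_zero {A : Matrix μ ν R}
    {U₁ : Matrix μ ι₁ R} {U₂ : Matrix μ ι₂ R} {V₁ : Matrix ν κ₁ R} {V₂ : Matrix ν κ₂ R}
    (hU : U₁ * U₁ᴴ + U₂ * U₂ᴴ = 1) (hV : V₁ * V₁ᴴ + V₂ * V₂ᴴ = 1)
    (h₁₂ : U₁ᴴ * A * V₂ = 0) (h₂₁ : U₂ᴴ * A * V₁ = 0) :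
    A = U₁ * (U₁ᴴ * A * V₁) * V₁ᴴ + U₂ * (U₂ᴴ * A * V₂) * V₂ᴴ := by
  calc A = (U₁ * U₁ᴴ + U₂ * U₂ᴴ) * A * (V₁ * V₁ᴴ + V₂ * V₂ᴴ) := by
        rw [hU, hV, Matrix.one_mul, Matrix.mul_one]
    _ = U₁ * (U₁ᴴ * A * V₁) * V₁ᴴ + U₁ * (U₁ᴴ * A * V₂) * V₂ᴴ +
        (U₂ * (U₂ᴴ * A * V₁) * V₁ᴴ + U₂ * (U₂ᴴ * A * V₂) * V₂ᴴ) := by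
        simp only [Matrix.add_mul, Matrix.mul_add, Matrix.mul_assoc]
        abel
    _ = _ := by
        rw [h₁₂, h₂₁, Matrix.mul_zero, Matrix.mul_zero, Matrix.zero_mul, Matrix.zero_mul, add_zero,
          zero_add]

end BlockDecomposition

section SingularSubspaces

variable {𝕜 μ ν ι₁ ι₂ κ₁ κ₂ : Type*} [RCLike 𝕜] [Fintype ι₁] [Fintype ι₂]
  [DecidableEq ι₂] [Fintype κ₁] [DecidableEq κ₁] [Fintype κ₂] [DecidableEq κ₂]

lemma exists_unitary_norm_compression_sub_le {R₁ : Matrix ι₁ ι₂ 𝕜} {R₂ : Matrix ι₂ ι₂ 𝕜}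
    {T₁ : Matrix κ₁ κ₂ 𝕜} {T₂ : Matrix κ₂ κ₂ 𝕜} (hR : R₁ᴴ * R₁ + R₂ᴴ * R₂ = 1)
    (hT : T₁ᴴ * T₁ + T₂ᴴ * T₂ = 1) (S₁ : Matrix ι₁ κ₁ 𝕜) (S₂ : Matrix ι₂ κ₂ 𝕜) :
    ∃ Z ∈ unitaryGroup ι₂ 𝕜, ∃ W ∈ unitaryGroup κ₂ 𝕜,
      ‖R₁ᴴ * S₁ * T₁ + R₂ᴴ * S₂ * T₂ - Zᴴ * S₂ * W‖ ≤
        ‖S₁‖ * (‖R₁‖ * ‖T₁‖) + ‖S₂‖ * (‖R₁‖ ^ 2 + ‖T₁‖ ^ 2) := by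
  classical
  obtain ⟨Z, hZ, hRZ⟩ := exists_mem_unitaryGroup_norm_sub_le_sq hR
  obtain ⟨W, hW, hTW⟩ := exists_mem_unitaryGroup_norm_sub_le_sq hT
  refine ⟨Z, hZ, W, hW, ?_⟩
  have norm_T₂ : ‖T₂‖ ≤ 1 :=
    l2_opNorm_le_one_of_conjTranspose_mul_self_add_eq_one ((add_comm _ _).trans hT)
  have norm_Z : ‖Z‖ ≤ 1 :=
    l2_opNorm_le_one_of_conjTranspose_mul_self_eq_one (mem_unitaryGroup_iff'.mp hZ)
  calc ‖R₁ᴴ * S₁ * T₁ + R₂ᴴ * S₂ * T₂ - Zᴴ * S₂ * W‖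
      = ‖R₁ᴴ * S₁ * T₁ + (R₂ - Z)ᴴ * S₂ * T₂ + Zᴴ * S₂ * (T₂ - W)‖ := by
        congr 1
        simp only [conjTranspose_sub, Matrix.sub_mul, Matrix.mul_sub]
        abel
    _ ≤ ‖R₁ᴴ * S₁ * T₁‖ + ‖(R₂ - Z)ᴴ * S₂ * T₂‖ + ‖Zᴴ * S₂ * (T₂ - W)‖ := norm_add₃_le
    _ ≤ ‖R₁‖ * ‖S₁‖ * ‖T₁‖ + ‖R₂ - Z‖ * ‖S₂‖ * ‖T₂‖ + ‖Z‖ * ‖S₂‖ * ‖T₂ - W‖ := by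
        grw [l2_opNorm_mul_mul_le, l2_opNorm_mul_mul_le, l2_opNorm_mul_mul_le]
        simp only [l2_opNorm_conjTranspose, le_refl]
    _ ≤ ‖R₁‖ * ‖S₁‖ * ‖T₁‖ + ‖R₁‖ ^ 2 * ‖S₂‖ * 1 + 1 * ‖S₂‖ * ‖T₁‖ ^ 2 := by gcongr
    _ = ‖S₁‖ * (‖R₁‖ * ‖T₁‖) + ‖S₂‖ * (‖R₁‖ ^ 2 + ‖T₁‖ ^ 2) := by ring

theorem exists_norm_augmented_sub_le_of_conjTranspose_mul_mul_eq_zero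
    [DecidableEq ι₁] [Fintype μ] [DecidableEq μ] [Fintype ν] [DecidableEq ν] (A : Matrix μ ν 𝕜)
    {U₁ : Matrix μ ι₁ 𝕜} {U₂ : Matrix μ ι₂ 𝕜} {V₁ : Matrix ν κ₁ 𝕜} {V₂ : Matrix ν κ₂ 𝕜}
    (hU : U₁ * U₁ᴴ + U₂ * U₂ᴴ = 1) (hV : V₁ * V₁ᴴ + V₂ * V₂ᴴ = 1)
    (h₁₂ : U₁ᴴ * A * V₂ = 0) (h₂₁ : U₂ᴴ * A * V₁ = 0)
    {P : Matrix μ ι₂ 𝕜} {Q : Matrix ν κ₂ 𝕜} (hP : Pᴴ * P = 1) (hQ : Qᴴ * Q = 1) (c d : 𝕜) :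
    ∃ Z : Matrix (ι₂ ⊕ κ₂) (ι₂ ⊕ κ₂) 𝕜, Zᴴ * Z = 1 ∧
      ‖augmented c d (Pᴴ * A * Q) - Zᴴ * augmented c d (U₂ᴴ * A * V₂) * Z‖ ≤
        ‖A‖ * (‖Pᴴ * U₁‖ ^ 2 + ‖Pᴴ * U₁‖ * ‖Qᴴ * V₁‖ + ‖Qᴴ * V₁‖ ^ 2) := by
  obtain ⟨Z, hZ, W, hW, hle⟩ := exists_unitary_norm_compression_sub_le
    (conjTranspose_mul_self_add_of_mul_conjTranspose_add hU hP)
    (conjTranspose_mul_self_add_of_mul_conjTranspose_add hV hQ) (U₁ᴴ * A * V₁) (U₂ᴴ * A * V₂)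
  rw [mem_unitaryGroup_iff', star_eq_conjTranspose] at hZ hW
  refine ⟨fromBlocks Z 0 0 W, fromBlocks_diagonal_conjTranspose_mul_self_eq_one hZ hW,
    (norm_augmented_sub_conj_augmented_le c d _ _ hZ hW).trans ?_⟩
  have norm_U₁ : ‖U₁‖ ≤ 1 := l2_opNorm_le_one_of_mul_conjTranspose_add_eq_one hU
  have norm_U₂ : ‖U₂‖ ≤ 1 :=
    l2_opNorm_le_one_of_mul_conjTranspose_add_eq_one ((add_comm _ _).trans hU)
  have norm_V₁ : ‖V₁‖ ≤ 1 := l2_opNorm_le_one_of_mul_conjTranspose_add_eq_one hV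
  have norm_V₂ : ‖V₂‖ ≤ 1 :=
    l2_opNorm_le_one_of_mul_conjTranspose_add_eq_one ((add_comm _ _).trans hV)
  have sin_eq_U : ‖U₁ᴴ * P‖ = ‖Pᴴ * U₁‖ := by rw [← l2_opNorm_conjTranspose]; simp
  have sin_eq_V : ‖V₁ᴴ * Q‖ = ‖Qᴴ * V₁‖ := by rw [← l2_opNorm_conjTranspose]; simp
  have compression_eq : Pᴴ * A * Q = (U₁ᴴ * P)ᴴ * (U₁ᴴ * A * V₁) * (V₁ᴴ * Q) +
      (U₂ᴴ * P)ᴴ * (U₂ᴴ * A * V₂) * (V₂ᴴ * Q) := by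
    conv_lhs => rw [eq_add_of_conjTranspose_mul_mul_eq_zero hU hV h₁₂ h₂₁]
    simp only [conjTranspose_mul, conjTranspose_conjTranspose, Matrix.mul_add, Matrix.add_mul,
      Matrix.mul_assoc]
  calc ‖Pᴴ * A * Q - Zᴴ * (U₂ᴴ * A * V₂) * W‖
      ≤ ‖U₁ᴴ * A * V₁‖ * (‖U₁ᴴ * P‖ * ‖V₁ᴴ * Q‖) +
        ‖U₂ᴴ * A * V₂‖ * (‖U₁ᴴ * P‖ ^ 2 + ‖V₁ᴴ * Q‖ ^ 2) := compression_eq ▸ hle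
    _ ≤ ‖A‖ * (‖U₁ᴴ * P‖ * ‖V₁ᴴ * Q‖) + ‖A‖ * (‖U₁ᴴ * P‖ ^ 2 + ‖V₁ᴴ * Q‖ ^ 2) := by
        gcongr
        · exact l2_opNorm_conjTranspose_mul_mul_le norm_U₁ norm_V₁ A
        · exact l2_opNorm_conjTranspose_mul_mul_le norm_U₂ norm_V₂ A
    _ = ‖A‖ * (‖Pᴴ * U₁‖ ^ 2 + ‖Pᴴ * U₁‖ * ‖Qᴴ * V₁‖ + ‖Qᴴ * V₁‖ ^ 2) := by
        rw [sin_eq_U, sin_eq_V]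
        ring

end SingularSubspaces

section IndexSplitting

/-- The splitting of the indices of `Fin M` into the first `m` and the remaining `M - m`, used to
cut an `M × M` matrix of singular vectors into its first `m` columns and the others. -/
def finSplit {m M : ℕ} (h : m ≤ M) : Fin m ⊕ Fin (M - m) ≃ Fin M :=
  finSumFinEquiv.trans (finCongr (Nat.add_sub_of_le h))

lemma finSplit_inl {m M : ℕ} (h : m ≤ M) (i : Fin m) :
    finSplit h (.inl i) = ⟨i, i.isLt.trans_le h⟩ := rfl

lemma finSplit_inr {m M : ℕ} (h : m ≤ M) (i : Fin (M - m)) :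
    finSplit h (.inr i) = ⟨i + m, Nat.add_lt_of_lt_sub i.isLt⟩ := by
  ext
  simp [finSplit, add_comm]

/-- The rectangular diagonal matrix with diagonal entries `σ`; if there are fewer rows than
columns, the surplus entries of `σ` do not occur. -/
def rectDiagonal {R : Type*} [Zero R] {M N : ℕ} (σ : Fin N → R) : Matrix (Fin M) (Fin N) R :=
  of fun i j => if (i : ℕ) = j then σ j else 0

lemma rectDiagonal_apply {R : Type*} [Zero R] {M N : ℕ} (σ : Fin N → R) (i : Fin M) (j : Fin N) :
    rectDiagonal σ i j = if (i : ℕ) = j then σ j else 0 := rfl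

section RectDiagonal

variable {R : Type*} [Zero R] {m M N : ℕ} (hM : m ≤ M) (hN : m ≤ N) (σ : Fin N → R)

lemma rectDiagonal_submatrix_inl_inr :
    (rectDiagonal σ).submatrix (finSplit hM ∘ .inl) (finSplit hN ∘ .inr) = 0 := by
  ext i j
  have : (i : ℕ) ≠ j + m := by omega
  simp [rectDiagonal_apply, finSplit_inl, finSplit_inr, this]

lemma rectDiagonal_submatrix_inr_inl :
    (rectDiagonal σ).submatrix (finSplit hM ∘ .inr) (finSplit hN ∘ .inl) = 0 := by
  ext i j
  have : (i : ℕ) + m ≠ j := by omega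
  simp [rectDiagonal_apply, finSplit_inl, finSplit_inr, this]

lemma rectDiagonal_submatrix_inr_inr :
    (rectDiagonal σ).submatrix (finSplit hM ∘ .inr) (finSplit hN ∘ .inr) =
      rectDiagonal (σ ∘ finSplit hN ∘ .inr) := by
  ext i j
  simp [rectDiagonal_apply, finSplit_inr]

end RectDiagonal

lemma submatrix_inl_mul_add_submatrix_inr_mul {R μ ν n ι κ : Type*} [Semiring R] [Fintype n]
    [Fintype ι] [Fintype κ] (A : Matrix μ n R) (B : Matrix n ν R) (e : ι ⊕ κ ≃ n) :
    A.submatrix id (e ∘ .inl) * B.submatrix (e ∘ .inl) id +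
      A.submatrix id (e ∘ .inr) * B.submatrix (e ∘ .inr) id = A * B := by
  ext i j
  simp [mul_apply, ← e.sum_comp, Fintype.sum_sum_type]

lemma submatrix_conjTranspose_mul_mul_submatrix {R α β μ ν ι κ : Type*} [Semiring R]
    [StarRing R] [Fintype α] [Fintype β] [Fintype μ] [DecidableEq μ] [Fintype ν] [DecidableEq ν]
    {U : Matrix α μ R} {V : Matrix β ν R} (hU : Uᴴ * U = 1) (hV : Vᴴ * V = 1) (S : Matrix μ ν R)
    (f : ι → μ) (g : κ → ν) :
    (U.submatrix id f)ᴴ * (U * S * Vᴴ) * V.submatrix id g = S.submatrix f g := by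
  calc _ = (Uᴴ * (U * S * Vᴴ) * V).submatrix f g := by
        simp only [conjTranspose_submatrix, ← submatrix_mul_equiv _ _ _ (Equiv.refl _) _]
        rfl
    _ = (Uᴴ * U * S * (Vᴴ * V)).submatrix f g := by simp only [Matrix.mul_assoc]
    _ = S.submatrix f g := by rw [hU, hV, Matrix.one_mul, Matrix.mul_one]

end IndexSplitting

theorem similarity_bound_m_general {𝕜 : Type*} [RCLike 𝕜] {m M N : ℕ} (hM : m ≤ M) (hN : m ≤ N)
    {U : Matrix (Fin M) (Fin M) 𝕜} {V : Matrix (Fin N) (Fin N) 𝕜} (hU : Uᴴ * U = 1)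
    (hV : Vᴴ * V = 1) (σ : Fin N → 𝕜) {A : Matrix (Fin M) (Fin N) 𝕜}
    (hA : A = U * rectDiagonal (M := M) σ * Vᴴ)
    {P : Matrix (Fin M) (Fin (M - m)) 𝕜} {Q : Matrix (Fin N) (Fin (N - m)) 𝕜} (hP : Pᴴ * P = 1)
    (hQ : Qᴴ * Q = 1) (c d : 𝕜) {a b : ℝ} (ha : ‖Pᴴ * U.submatrix id (finSplit hM ∘ .inl)‖ = a)
    (hb : ‖Qᴴ * V.submatrix id (finSplit hN ∘ .inl)‖ = b) :
    ∃ Z : Matrix (Fin (M - m) ⊕ Fin (N - m)) (Fin (M - m) ⊕ Fin (N - m)) 𝕜, Zᴴ * Z = 1 ∧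
      ‖augmented c d (Pᴴ * A * Q) -
          Zᴴ * augmented c d (rectDiagonal (σ ∘ finSplit hN ∘ .inr)) * Z‖ ≤
        ‖A‖ * (a ^ 2 + a * b + b ^ 2) := by
  subst ha hb
  have block {ι κ : Type} (f : ι → Fin M) (g : κ → Fin N) :
      (U.submatrix id f)ᴴ * A * V.submatrix id g = (rectDiagonal σ).submatrix f g :=
    hA ▸ submatrix_conjTranspose_mul_mul_submatrix hU hV (rectDiagonal σ) f g
  have hU_split := submatrix_inl_mul_add_submatrix_inr_mul U Uᴴ (finSplit hM)
  have hV_split := submatrix_inl_mul_add_submatrix_inr_mul V Vᴴ (finSplit hN)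
  rw [mul_eq_one_comm.mp hU] at hU_split
  rw [mul_eq_one_comm.mp hV] at hV_split
  rw [← rectDiagonal_submatrix_inr_inr hM hN σ, ← block]
  exact exists_norm_augmented_sub_le_of_conjTranspose_mul_mul_eq_zero A hU_split hV_split
    ((block _ _).trans (rectDiagonal_submatrix_inl_inr hM hN σ))
    ((block _ _).trans (rectDiagonal_submatrix_inr_inl hM hN σ)) hP hQ c d

/-- Theorem 4.3. The reduced coefficient matrix `B̃_m'` of the
preconditioned JDSVD correction equation is orthogonally similar to its exact counterpart
`B_m'` up to an error bounded by `‖A‖ (‖sin Φ‖ + ‖sin Ψ‖)²`. -/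
theorem similarity_bound_m {M N m : ℕ} (hN : 2 ≤ N) (hMN : N ≤ M)
    (hm : 1 ≤ m) (hmN : m < N)
    (A : Matrix (Fin M) (Fin N) ℝ)
    (U : Matrix (Fin M) (Fin M) ℝ) (V : Matrix (Fin N) (Fin N) ℝ)
    (hU : Uᵀ * U = 1) (hV : Vᵀ * V = 1)
    (σ : Fin N → ℝ) (hσ : ∀ i, 0 ≤ σ i)
    (S : Matrix (Fin M) (Fin N) ℝ)
    (hS : ∀ i j, S i j = if (i : ℕ) = (j : ℕ) then σ j else 0)
    (hA : A = U * S * Vᵀ)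
    (τ : ℝ) (hτ0 : 0 ≤ τ)
    (Um : Matrix (Fin M) (Fin m) ℝ)
    (hUm : ∀ i j, Um i j = U i ⟨(j : ℕ), by have := j.isLt; omega⟩)
    (Vm : Matrix (Fin N) (Fin m) ℝ)
    (hVm : ∀ i j, Vm i j = V i ⟨(j : ℕ), by have := j.isLt; omega⟩)
    (Ut : Matrix (Fin M) (Fin m) ℝ) (Vt : Matrix (Fin N) (Fin m) ℝ)
    (hUt : Utᵀ * Ut = 1) (hVt : Vtᵀ * Vt = 1)
    (Pt : Matrix (Fin M) (Fin (M - m)) ℝ)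
    (hPt1 : Ptᵀ * Pt = 1) (hPt2 : Ptᵀ * Ut = 0)
    (hPt3 : Ut * Utᵀ + Pt * Ptᵀ = 1)
    (Qt : Matrix (Fin N) (Fin (N - m)) ℝ)
    (hQt1 : Qtᵀ * Qt = 1) (hQt2 : Qtᵀ * Vt = 0)
    (hQt3 : Vt * Vtᵀ + Qt * Qtᵀ = 1)
    (Sm : Matrix (Fin (M - m)) (Fin (N - m)) ℝ)
    (hSm : ∀ i j, Sm i j =
      if (i : ℕ) = (j : ℕ) then σ ⟨(j : ℕ) + m, by have := j.isLt; omega⟩ else 0)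
    (Bmt' Bm' : Matrix (Fin (M - m) ⊕ Fin (N - m)) (Fin (M - m) ⊕ Fin (N - m)) ℝ)
    (hBmt' : Bmt' = Matrix.fromBlocks ((-τ) • 1) (Ptᵀ * A * Qt) (Qtᵀ * Aᵀ * Pt) ((-τ) • 1))
    (hBm' : Bm' = Matrix.fromBlocks ((-τ) • 1) Sm Smᵀ ((-τ) • 1)) :
    ∃ Z : Matrix (Fin (M - m) ⊕ Fin (N - m)) (Fin (M - m) ⊕ Fin (N - m)) ℝ,
      Zᵀ * Z = 1 ∧
      specNorm (Bmt' - Zᵀ * Bm' * Z) ≤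
        specNorm A * (specNorm (Ptᵀ * Um) + specNorm (Qtᵀ * Vm)) ^ 2 := by
  simp only [← conjTranspose_eq_transpose_of_trivial, specNorm_eq_norm] at *
  have hM : m ≤ M := hmN.le.trans hMN
  obtain rfl : S = rectDiagonal σ := ext hS
  obtain rfl : Um = U.submatrix id (finSplit hM ∘ .inl) := ext hUm
  obtain rfl : Vm = V.submatrix id (finSplit hmN.le ∘ .inl) := ext hVm
  obtain rfl : Sm = rectDiagonal (σ ∘ finSplit hmN.le ∘ .inr) := ext fun i j => by
    rw [hSm, rectDiagonal_apply, Function.comp_apply, Function.comp_apply, finSplit_inr]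
  have hBmt : Bmt' = augmented (-τ) (-τ) (Ptᴴ * A * Qt) := by
    rw [hBmt', augmented, conjTranspose_mul, conjTranspose_mul, conjTranspose_conjTranspose,
      Matrix.mul_assoc Qtᴴ]
  obtain ⟨Z, hZ, hle⟩ := similarity_bound_m_general hM hmN.le hU hV σ hA hPt1 hQt1 (-τ) (-τ) rfl rfl
  rw [← hBmt, augmented, ← hBm'] at hle
  refine ⟨Z, hZ, hle.trans ?_⟩
  gcongr
  rw [add_sq]
  linarith [mul_nonneg (norm_nonneg (Ptᴴ * U.submatrix id (finSplit hM ∘ .inl)))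
    (norm_nonneg (Qtᴴ * V.submatrix id (finSplit hmN.le ∘ .inl)))]
end

section
/- Assume 0 < τ, σ_min ≤ τ < (σ_min + σ_min,m+1)/2, and δ < σ_min,m+1 − τ, and let r ∈ ℝ^{M+N} satisfy Π̃_m r = r. Set j₀ = min{1, M−N}. Then for every j ≥ j₀ there exists w ∈ K_j(B̃_m, r) such that ‖B̃_m w + r‖ ≤ 2 · ((σ_max + δ)/τ)^{j₀} · (1 − 2/(1 + √(((σ_max + δ)² − τ²)/((σ_min,m+1 − δ)² − τ²))))^{⌊(j−j₀)/2⌋} · ‖r‖, where ⌊·⌋ denotes the integer part. -/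
open Matrix

noncomputable def vnorm {ι : Type*} [Fintype ι] (x : ι → ℝ) : ℝ :=
  Real.sqrt (∑ i, x i ^ 2)

noncomputable def Krylov {ι : Type*} [Fintype ι] [DecidableEq ι]
    (B : Matrix ι ι ℝ) (r : ι → ℝ) (j : ℕ) : Submodule ℝ (ι → ℝ) :=
  Submodule.span ℝ {x | ∃ i < j, x = (B ^ i) *ᵥ r}

/-!
The residual polynomials of MINRES are the `p` with `p 0 = 1`, and on a symmetric matrix the
residual is controlled by the values of `p` on the eigenvalues that occur in `r`. With
`T = (1 - ŨŨᵀ) A (1 - ṼṼᵀ)`, these eigenvalues are `l - τ`, where `T y = l x` and `Tᵀ x = l y`.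
Each such `l` either vanishes, which forces `M ≠ N`, or satisfies `σ_min,m+1 - δ ≤ |l| ≤ σ_max`.
The quadratic map `μ ↦ μ² + 2τμ = (μ + τ)² - τ²` folds the two symmetric intervals of admissible
`l = μ + τ` onto a single positive interval, where a Chebyshev polynomial of half the degree is
small; one extra factor `1 + μ/τ` kills the eigenvalue `-τ`.

For the lower bound on `|l|`, split a vector `y` of the deflated space along the exact singular
subspace. The part orthogonal to it is shortened by at most a factor `1 - sin² Ψ`; it is stretched
by at least `σ_min,m+1` under `A`, and the left deflation costs another factor `1 - sin² Φ`. The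
part in the singular subspace has size at most `sin Ψ ‖y‖`, and the left deflation keeps at most the
fraction `sin Φ` of its image.
-/

section Norms

variable {ι κ : Type*} [Fintype ι] [Fintype κ]

theorem vnorm_eq_norm_toLp (x : ι → ℝ) : vnorm x = ‖WithLp.toLp 2 x‖ := by
  simp [vnorm, EuclideanSpace.norm_eq]

theorem vnorm_nonneg (x : ι → ℝ) : 0 ≤ vnorm x := Real.sqrt_nonneg _

theorem vnorm_sq (x : ι → ℝ) : vnorm x ^ 2 = x ⬝ᵥ x := by
  rw [vnorm, Real.sq_sqrt (Finset.sum_nonneg fun i _ => sq_nonneg _)]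
  simp only [dotProduct, sq]

@[simp]
theorem vnorm_zero : vnorm (0 : ι → ℝ) = 0 := by simp [vnorm]

theorem vnorm_pos {x : ι → ℝ} : 0 < vnorm x ↔ x ≠ 0 := by
  rw [vnorm_eq_norm_toLp, norm_pos_iff, ne_eq, WithLp.toLp_eq_zero]

theorem vnorm_sub_le_vnorm_add (x y : ι → ℝ) : vnorm x - vnorm y ≤ vnorm (x + y) := by
  simpa only [vnorm_eq_norm_toLp, WithLp.toLp_add] using
    norm_sub_le_norm_add (WithLp.toLp 2 x) (WithLp.toLp 2 y)

theorem vnorm_le_vnorm_of_abs_le {x y : ι → ℝ} (h : ∀ i, |x i| ≤ |y i|) : vnorm x ≤ vnorm y :=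
  Real.sqrt_le_sqrt (Finset.sum_le_sum fun i _ => sq_le_sq.2 (h i))

theorem vnorm_smul (c : ℝ) (x : ι → ℝ) : vnorm (c • x) = |c| * vnorm x := by
  rw [vnorm_eq_norm_toLp, vnorm_eq_norm_toLp, WithLp.toLp_smul, norm_smul, Real.norm_eq_abs]

theorem dotProduct_le_vnorm_mul_vnorm (x y : ι → ℝ) : x ⬝ᵥ y ≤ vnorm x * vnorm y := by
  rw [vnorm, vnorm, ← Real.sqrt_mul (Finset.sum_nonneg fun i _ => sq_nonneg _)]
  exact Real.le_sqrt_of_sq_le (Finset.sum_mul_sq_le_sq_mul_sq _ x y)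

/-- The lower bound transfers to the transpose because a square matrix that is bounded below is
surjective. -/
theorem mul_vnorm_sq_le_vnorm_transpose_mulVec_sq {C : Matrix ι ι ℝ} {c : ℝ}
    (hC : ∀ w, c * vnorm w ^ 2 ≤ vnorm (C *ᵥ w) ^ 2) (q : ι → ℝ) :
    c * vnorm q ^ 2 ≤ vnorm (Cᵀ *ᵥ q) ^ 2 := by
  classical
  rcases le_or_gt c 0 with hc | hc
  · exact (mul_nonpos_of_nonpos_of_nonneg hc (sq_nonneg _)).trans (sq_nonneg _)
  rcases eq_or_ne q 0 with rfl | hq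
  · simp
  have hinj : Function.Injective C.mulVecLin := by
    rw [injective_iff_map_eq_zero]
    intro w hw
    by_contra hw0
    have := hC w
    rw [show C *ᵥ w = 0 from hw, vnorm_zero] at this
    have := vnorm_pos.2 hw0
    nlinarith [mul_pos hc (pow_pos this 2)]
  obtain ⟨w, rfl : C *ᵥ w = q⟩ := LinearMap.injective_iff_surjective.1 hinj q
  have hq_le : vnorm (C *ᵥ w) ^ 2 ≤ vnorm w * vnorm (Cᵀ *ᵥ (C *ᵥ w)) := by
    rw [vnorm_sq, ← dotProduct_transpose_mulVec]
    exact dotProduct_le_vnorm_mul_vnorm _ _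
  refine le_of_mul_le_mul_right ?_ (pow_pos (vnorm_pos.2 hq) 2)
  calc c * vnorm (C *ᵥ w) ^ 2 * vnorm (C *ᵥ w) ^ 2
      = c * (vnorm (C *ᵥ w) ^ 2) ^ 2 := by ring
    _ ≤ c * (vnorm w * vnorm (Cᵀ *ᵥ (C *ᵥ w))) ^ 2 := by gcongr
    _ = vnorm (Cᵀ *ᵥ (C *ᵥ w)) ^ 2 * (c * vnorm w ^ 2) := by ring
    _ ≤ vnorm (Cᵀ *ᵥ (C *ᵥ w)) ^ 2 * vnorm (C *ᵥ w) ^ 2 := by gcongr; exact hC w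

variable [DecidableEq κ]

theorem specNorm_nonneg (A : Matrix ι κ ℝ) : 0 ≤ specNorm A := norm_nonneg _

theorem vnorm_mulVec_le (A : Matrix ι κ ℝ) (x : κ → ℝ) :
    vnorm (A *ᵥ x) ≤ specNorm A * vnorm x := by
  rw [vnorm_eq_norm_toLp, vnorm_eq_norm_toLp]
  exact (LinearMap.toContinuousLinearMap (Matrix.toEuclideanLin A)).le_opNorm (WithLp.toLp 2 x)

theorem specNorm_le {A : Matrix ι κ ℝ} {c : ℝ} (hc : 0 ≤ c)
    (h : ∀ x, vnorm (A *ᵥ x) ≤ c * vnorm x) : specNorm A ≤ c := by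
  refine ContinuousLinearMap.opNorm_le_bound _ hc fun x => ?_
  simpa [vnorm_eq_norm_toLp, toLpLin_apply] using h (WithLp.ofLp x)

theorem specNorm_transpose [DecidableEq ι] (A : Matrix ι κ ℝ) : specNorm Aᵀ = specNorm A := by
  rw [← conjTranspose_eq_transpose_of_trivial]
  exact l2_opNorm_conjTranspose A

end Norms

section Projectors

variable {ι ν : Type*} [Fintype ν] [DecidableEq ι]

/-- For `Q` with orthonormal columns, the orthogonal projector onto the complement of the column
space of `Q`. -/
def complProj (Q : Matrix ι ν ℝ) : Matrix ι ι ℝ := 1 - Q * Qᵀ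

@[simp]
theorem complProj_transpose (Q : Matrix ι ν ℝ) : (complProj Q)ᵀ = complProj Q := by
  simp [complProj]

variable [Fintype ι] [DecidableEq ν] {Q : Matrix ι ν ℝ} (hQ : Qᵀ * Q = 1)
include hQ

omit [DecidableEq ι] in
theorem vnorm_mulVec_of_transpose_mul_self (x : ν → ℝ) : vnorm (Q *ᵥ x) = vnorm x := by
  refine (sq_eq_sq₀ (vnorm_nonneg _) (vnorm_nonneg _)).1 ?_
  rw [vnorm_sq, vnorm_sq, ← dotProduct_transpose_mulVec, mulVec_mulVec, hQ, one_mulVec]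

omit [DecidableEq ι] in
theorem card_le_card_of_transpose_mul_self : Fintype.card ν ≤ Fintype.card ι := by
  have hinj : Function.Injective Q.mulVecLin := fun x y hxy => by
    simpa [mulVec_mulVec, hQ] using congrArg (Qᵀ *ᵥ ·) hxy
  simpa using LinearMap.finrank_le_finrank_of_injective hinj

theorem complProj_mul_of_transpose_mul_self : complProj Q * Q = 0 := by
  rw [complProj, Matrix.sub_mul, Matrix.mul_assoc, hQ, Matrix.one_mul, Matrix.mul_one, sub_self]

theorem transpose_mul_complProj : Qᵀ * complProj Q = 0 := by
  simpa using congrArg transpose (complProj_mul_of_transpose_mul_self hQ)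

theorem complProj_mul_self : complProj Q * complProj Q = complProj Q := by
  nth_rw 2 [complProj]
  rw [Matrix.mul_sub, ← Matrix.mul_assoc, complProj_mul_of_transpose_mul_self hQ, Matrix.mul_one,
    Matrix.zero_mul, sub_zero]

theorem vnorm_complProj_mulVec_sq (x : ι → ℝ) :
    vnorm (complProj Q *ᵥ x) ^ 2 = vnorm x ^ 2 - vnorm (Qᵀ *ᵥ x) ^ 2 := by
  rw [vnorm_sq, dotProduct_mulVec, ← mulVec_transpose, complProj_transpose, mulVec_mulVec,
    complProj_mul_self hQ, complProj, sub_mulVec, one_mulVec, sub_dotProduct, ← mulVec_mulVec,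
    vnorm_sq, vnorm_sq, dotProduct_transpose_mulVec, dotProduct_comm (Q *ᵥ _)]

omit [DecidableEq ι] in
theorem vnorm_transpose_mulVec_le (x : ι → ℝ) : vnorm (Qᵀ *ᵥ x) ≤ vnorm x := by
  classical
  refine le_of_sq_le_sq ?_ (vnorm_nonneg x)
  linarith [vnorm_complProj_mulVec_sq hQ x, sq_nonneg (vnorm (complProj Q *ᵥ x))]

theorem vnorm_complProj_mulVec_le (x : ι → ℝ) : vnorm (complProj Q *ᵥ x) ≤ vnorm x := by
  refine le_of_sq_le_sq ?_ (vnorm_nonneg x)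
  rw [vnorm_complProj_mulVec_sq hQ]
  linarith [sq_nonneg (vnorm (Qᵀ *ᵥ x))]

end Projectors

section Angles

variable {ι κ ν μ : Type*} [Fintype ι] [Fintype κ] [Fintype ν] [Fintype μ]
  [DecidableEq ι] [DecidableEq ν] [DecidableEq μ]

/-- For `X` and `Y` with orthonormal columns, the sine of the largest angle between a vector of the
column space of `X` and the column space of `Y`; it is the paper's `‖sin Φ‖` for `X = U_m`,
`Y = Ũ_m`. -/
noncomputable def sinAngle (X : Matrix ι ν ℝ) (Y : Matrix ι μ ℝ) : ℝ := specNorm (complProj Y * X)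

omit [DecidableEq μ] in
theorem sinAngle_nonneg (X : Matrix ι ν ℝ) (Y : Matrix ι μ ℝ) : 0 ≤ sinAngle X Y :=
  specNorm_nonneg _

omit [DecidableEq μ] in
theorem vnorm_complProj_mulVec_mulVec_le (X : Matrix ι ν ℝ) (Y : Matrix ι μ ℝ) (w : ν → ℝ) :
    vnorm (complProj Y *ᵥ (X *ᵥ w)) ≤ sinAngle X Y * vnorm w := by
  rw [mulVec_mulVec]
  exact vnorm_mulVec_le _ w

theorem sinAngle_le_one {X : Matrix ι ν ℝ} {Y : Matrix ι μ ℝ} (hX : Xᵀ * X = 1)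
    (hY : Yᵀ * Y = 1) : sinAngle X Y ≤ 1 := by
  refine specNorm_le zero_le_one fun w => ?_
  rw [← mulVec_mulVec, one_mul, ← vnorm_mulVec_of_transpose_mul_self hX w]
  exact vnorm_complProj_mulVec_le hY _

omit [DecidableEq μ] in
theorem vnorm_transpose_mulVec_le_sinAngle (X : Matrix ι ν ℝ) {Y : Matrix ι μ ℝ} {y : ι → ℝ}
    (hy : complProj Y *ᵥ y = y) : vnorm (Xᵀ *ᵥ y) ≤ sinAngle X Y * vnorm y := by
  have hXy : Xᵀ *ᵥ y = (complProj Y * X)ᵀ *ᵥ y := by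
    rw [transpose_mul, complProj_transpose, ← mulVec_mulVec, hy]
  rw [hXy, sinAngle, ← specNorm_transpose]
  exact vnorm_mulVec_le _ y

theorem sinAngle_swap_le {X Y : Matrix ι ν ℝ} (hX : Xᵀ * X = 1) (hY : Yᵀ * Y = 1) :
    sinAngle Y X ≤ sinAngle X Y := by
  set s := sinAngle X Y
  have hYX (w : ν → ℝ) : (1 - s ^ 2) * vnorm w ^ 2 ≤ vnorm ((Yᵀ * X) *ᵥ w) ^ 2 := by
    have hpyth := vnorm_complProj_mulVec_sq hY (X *ᵥ w)
    rw [vnorm_mulVec_of_transpose_mul_self hX, mulVec_mulVec _ Yᵀ] at hpyth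
    have := pow_le_pow_left₀ (vnorm_nonneg _) (vnorm_complProj_mulVec_mulVec_le X Y w) 2
    linarith
  refine specNorm_le (sinAngle_nonneg X Y) fun q => ?_
  refine le_of_sq_le_sq ?_ (mul_nonneg (sinAngle_nonneg X Y) (vnorm_nonneg q))
  have hpyth := vnorm_complProj_mulVec_sq hX (Y *ᵥ q)
  have hXY := mul_vnorm_sq_le_vnorm_transpose_mulVec_sq hYX q
  rw [vnorm_mulVec_of_transpose_mul_self hY, mulVec_mulVec, mulVec_mulVec] at hpyth
  rw [transpose_mul, transpose_transpose] at hXY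
  linarith

theorem sinAngle_comm {X Y : Matrix ι ν ℝ} (hX : Xᵀ * X = 1) (hY : Yᵀ * Y = 1) :
    sinAngle X Y = sinAngle Y X :=
  (sinAngle_swap_le hY hX).antisymm (sinAngle_swap_le hX hY)

theorem one_sub_sq_mul_vnorm_le {Q : Matrix ι ν ℝ} (hQ : Qᵀ * Q = 1) {z : ι → ℝ} {s : ℝ}
    (hs0 : 0 ≤ s) (hs1 : s ≤ 1) (hz : vnorm (Qᵀ *ᵥ z) ≤ s * vnorm z) :
    (1 - s ^ 2) * vnorm z ≤ vnorm (complProj Q *ᵥ z) := by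
  have hs : 0 ≤ 1 - s ^ 2 := by nlinarith
  refine le_of_sq_le_sq ?_ (vnorm_nonneg _)
  calc ((1 - s ^ 2) * vnorm z) ^ 2 = (1 - s ^ 2) * ((1 - s ^ 2) * vnorm z ^ 2) := by ring
    _ ≤ 1 * ((1 - s ^ 2) * vnorm z ^ 2) := by gcongr; linarith [sq_nonneg s]
    _ = vnorm z ^ 2 - (s * vnorm z) ^ 2 := by ring
    _ ≤ vnorm z ^ 2 - vnorm (Qᵀ *ᵥ z) ^ 2 := by gcongr; exact vnorm_nonneg _
    _ = vnorm (complProj Q *ᵥ z) ^ 2 := (vnorm_complProj_mulVec_sq hQ z).symm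

end Angles

section Deflation

variable {ι κ ν : Type*} [Fintype ι] [Fintype κ] [Fintype ν]
  [DecidableEq ι] [DecidableEq κ] [DecidableEq ν]

/-- The columns of `X` and `Z` are orthonormal bases of a pair of left and right singular subspaces
of `A`: `A` maps the span of `Z` into the span of `X`, and `Aᵀ` maps it back into that of `Z`. -/
structure IsSingularSubspacePair (A : Matrix ι κ ℝ) (X : Matrix ι ν ℝ) (Z : Matrix κ ν ℝ) :
    Prop where
  left_orthonormal : Xᵀ * X = 1
  right_orthonormal : Zᵀ * Z = 1
  mul_right : X * (Xᵀ * (A * Z)) = A * Z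
  transpose_mul_left : Z * (Zᵀ * (Aᵀ * X)) = Aᵀ * X

/-- The matrix `A` compressed to the orthogonal complements of the column spaces of `Y` (on the
left) and `W` (on the right), for `Y` and `W` with orthonormal columns. -/
def deflated (A : Matrix ι κ ℝ) (Y : Matrix ι ν ℝ) (W : Matrix κ ν ℝ) : Matrix ι κ ℝ :=
  complProj Y * A * complProj W

omit [DecidableEq ν] in
theorem deflated_transpose (A : Matrix ι κ ℝ) (Y : Matrix ι ν ℝ) (W : Matrix κ ν ℝ) :
    (deflated A Y W)ᵀ = deflated Aᵀ W Y := by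
  simp [deflated, Matrix.mul_assoc]

omit [DecidableEq ν] in
theorem deflated_mulVec (A : Matrix ι κ ℝ) (Y : Matrix ι ν ℝ) {W : Matrix κ ν ℝ} {y : κ → ℝ}
    (hy : complProj W *ᵥ y = y) : deflated A Y W *ᵥ y = complProj Y *ᵥ (A *ᵥ y) := by
  rw [deflated, ← mulVec_mulVec, ← mulVec_mulVec, hy]

theorem specNorm_deflated_le (A : Matrix ι κ ℝ) {Y : Matrix ι ν ℝ} {W : Matrix κ ν ℝ}
    (hY : Yᵀ * Y = 1) (hW : Wᵀ * W = 1) : specNorm (deflated A Y W) ≤ specNorm A := by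
  refine specNorm_le (specNorm_nonneg A) fun y => ?_
  rw [deflated, ← mulVec_mulVec, ← mulVec_mulVec]
  calc vnorm (complProj Y *ᵥ (A *ᵥ (complProj W *ᵥ y))) ≤ vnorm (A *ᵥ (complProj W *ᵥ y)) :=
        vnorm_complProj_mulVec_le hY _
    _ ≤ specNorm A * vnorm (complProj W *ᵥ y) := vnorm_mulVec_le A _
    _ ≤ specNorm A * vnorm y := by
        gcongr
        exacts [specNorm_nonneg A, vnorm_complProj_mulVec_le hW y]

namespace IsSingularSubspacePair

variable {A : Matrix ι κ ℝ} {X Y : Matrix ι ν ℝ} {Z W : Matrix κ ν ℝ}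

omit [DecidableEq ι] [DecidableEq κ] in
theorem transpose_mulVec_mulVec_eq_zero (h : IsSingularSubspacePair A X Z) {y : κ → ℝ}
    (hy : Zᵀ *ᵥ y = 0) : Xᵀ *ᵥ (A *ᵥ y) = 0 := by
  have hXA : Xᵀ * A = Xᵀ * A * Z * Zᵀ := by
    simpa [Matrix.mul_assoc] using congrArg transpose h.transpose_mul_left.symm
  rw [mulVec_mulVec, hXA, ← mulVec_mulVec, hy, mulVec_zero]

omit [DecidableEq κ] in
theorem le_vnorm_complProj_mulVec_orthogonal (h : IsSingularSubspacePair A X Z)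
    (hY : Yᵀ * Y = 1) {y : κ → ℝ} (hy : Zᵀ *ᵥ y = 0) :
    (1 - sinAngle X Y ^ 2) * vnorm (A *ᵥ y) ≤ vnorm (complProj Y *ᵥ (A *ᵥ y)) := by
  have hs0 := sinAngle_nonneg X Y
  have hs1 := sinAngle_le_one h.left_orthonormal hY
  have hAy : complProj X *ᵥ (A *ᵥ y) = A *ᵥ y := by
    rw [complProj, sub_mulVec, one_mulVec, ← mulVec_mulVec,
      h.transpose_mulVec_mulVec_eq_zero hy, mulVec_zero, sub_zero]
  have hYAy : vnorm (Yᵀ *ᵥ (A *ᵥ y)) ≤ sinAngle X Y * vnorm (A *ᵥ y) := by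
    rw [sinAngle_comm h.left_orthonormal hY]
    exact vnorm_transpose_mulVec_le_sinAngle Y hAy
  exact one_sub_sq_mul_vnorm_le hY hs0 hs1 hYAy

theorem vnorm_complProj_mulVec_subspace_le (h : IsSingularSubspacePair A X Z)
    (Y : Matrix ι ν ℝ) (c : ν → ℝ) :
    vnorm (complProj Y *ᵥ (A *ᵥ (Z *ᵥ c))) ≤ sinAngle X Y * (specNorm A * vnorm c) := by
  have hX : X *ᵥ (Xᵀ *ᵥ (A *ᵥ (Z *ᵥ c))) = A *ᵥ (Z *ᵥ c) := by
    simp only [mulVec_mulVec, h.mul_right]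
  have hc : vnorm (Xᵀ *ᵥ (A *ᵥ (Z *ᵥ c))) ≤ specNorm A * vnorm c := by
    rw [← vnorm_mulVec_of_transpose_mul_self h.left_orthonormal, hX,
      ← vnorm_mulVec_of_transpose_mul_self h.right_orthonormal c]
    exact vnorm_mulVec_le A _
  rw [← hX]
  exact (vnorm_complProj_mulVec_mulVec_le X Y _).trans
    (mul_le_mul_of_nonneg_left hc (sinAngle_nonneg X Y))

theorem le_vnorm_deflated_mulVec (h : IsSingularSubspacePair A X Z) (hY : Yᵀ * Y = 1)
    (hW : Wᵀ * W = 1) {c : ℝ} (hc0 : 0 ≤ c) (hcA : c ≤ specNorm A)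
    (hlow : ∀ y, Zᵀ *ᵥ y = 0 → c * vnorm y ≤ vnorm (A *ᵥ y))
    {y : κ → ℝ} (hy : complProj W *ᵥ y = y) :
    (c - specNorm A * (sinAngle X Y + sinAngle Z W) ^ 2) * vnorm y
      ≤ vnorm (deflated A Y W *ᵥ y) := by
  have hs0 := sinAngle_nonneg X Y
  have hs1 := sinAngle_le_one h.left_orthonormal hY
  have ht0 := sinAngle_nonneg Z W
  have ht1 := sinAngle_le_one h.right_orthonormal hW
  have hZy := vnorm_transpose_mulVec_le_sinAngle Z hy
  have hZ : Zᵀ *ᵥ (complProj Z *ᵥ y) = 0 := by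
    rw [mulVec_mulVec, transpose_mul_complProj h.right_orthonormal, zero_mulVec]
  have hpar := h.vnorm_complProj_mulVec_subspace_le Y (Zᵀ *ᵥ y)
  have hy_perp := one_sub_sq_mul_vnorm_le h.right_orthonormal ht0 ht1 hZy
  have hy_split : complProj Z *ᵥ y + Z *ᵥ (Zᵀ *ᵥ y) = y := by
    rw [complProj, sub_mulVec, one_mulVec, mulVec_mulVec, sub_add_cancel]
  have hsplit : deflated A Y W *ᵥ y = complProj Y *ᵥ (A *ᵥ (complProj Z *ᵥ y))
      + complProj Y *ᵥ (A *ᵥ (Z *ᵥ (Zᵀ *ᵥ y))) := by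
    rw [deflated_mulVec A Y hy, ← mulVec_add, ← mulVec_add, hy_split]
  set s := sinAngle X Y
  set t := sinAngle Z W
  set a := specNorm A
  have ha0 : 0 ≤ a := specNorm_nonneg A
  have hs : 0 ≤ 1 - s ^ 2 := by nlinarith
  have harith : c - a * (s + t) ^ 2 ≤ (1 - s ^ 2) * (c * (1 - t ^ 2)) - s * (a * t) := by
    have h1 : c * (s ^ 2 + t ^ 2) ≤ a * (s ^ 2 + t ^ 2) := by gcongr
    have h2 : 0 ≤ c * (s ^ 2 * t ^ 2) := by positivity
    have h3 : 0 ≤ a * (s * t) := by positivity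
    linarith
  calc (c - a * (s + t) ^ 2) * vnorm y
      ≤ ((1 - s ^ 2) * (c * (1 - t ^ 2)) - s * (a * t)) * vnorm y :=
        mul_le_mul_of_nonneg_right harith (vnorm_nonneg y)
    _ = (1 - s ^ 2) * (c * ((1 - t ^ 2) * vnorm y)) - s * (a * (t * vnorm y)) := by ring
    _ ≤ (1 - s ^ 2) * (c * vnorm (complProj Z *ᵥ y)) - s * (a * vnorm (Zᵀ *ᵥ y)) := by gcongr
    _ ≤ (1 - s ^ 2) * vnorm (A *ᵥ (complProj Z *ᵥ y)) - s * (a * vnorm (Zᵀ *ᵥ y)) := by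
        gcongr
        exact hlow _ hZ
    _ ≤ vnorm (complProj Y *ᵥ (A *ᵥ (complProj Z *ᵥ y)))
        - vnorm (complProj Y *ᵥ (A *ᵥ (Z *ᵥ (Zᵀ *ᵥ y)))) :=
        sub_le_sub (h.le_vnorm_complProj_mulVec_orthogonal hY hZ) hpar
    _ ≤ vnorm (deflated A Y W *ᵥ y) := by rw [hsplit]; exact vnorm_sub_le_vnorm_add _ _

end IsSingularSubspacePair

end Deflation

section SingularValues

/-- A singular value decomposition `A = U Σ Vᵀ` in economy form: `Σ` is a square diagonal matrix
with nonnegative entries `σ`, and `U` and `V` have orthonormal columns but need not be square. -/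
structure IsThinSVD {ι κ ρ : Type*} [Fintype ι] [Fintype κ] [Fintype ρ] [DecidableEq ρ]
    (A : Matrix ι κ ℝ) (U : Matrix ι ρ ℝ) (V : Matrix κ ρ ℝ) (σ : ρ → ℝ) : Prop where
  left_orthonormal : Uᵀ * U = 1
  right_orthonormal : Vᵀ * V = 1
  nonneg : ∀ i, 0 ≤ σ i
  eq_mul : A = U * diagonal σ * Vᵀ

theorem transpose_submatrix_mul_submatrix_eq_one {ι ν ρ : Type*} [Fintype ι] [DecidableEq ν]
    [DecidableEq ρ] {Q : Matrix ι ρ ℝ} (hQ : Qᵀ * Q = 1) {f : ν → ρ} (hf : Function.Injective f) :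
    (Q.submatrix id f)ᵀ * Q.submatrix id f = 1 := by
  rw [transpose_submatrix, ← submatrix_mul _ _ f id f Function.bijective_id, hQ,
    submatrix_one f hf]

namespace IsThinSVD

theorem of_svd {M N : ℕ} (hMN : N ≤ M) {A : Matrix (Fin M) (Fin N) ℝ} {U : Matrix (Fin M) (Fin M) ℝ}
    {V : Matrix (Fin N) (Fin N) ℝ} (hU : Uᵀ * U = 1) (hV : Vᵀ * V = 1) {σ : Fin N → ℝ}
    (hσ : ∀ i, 0 ≤ σ i) {S : Matrix (Fin M) (Fin N) ℝ}
    (hS : ∀ i j, S i j = if (i : ℕ) = (j : ℕ) then σ j else 0) (hA : A = U * S * Vᵀ) :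
    IsThinSVD A (U.submatrix id (Fin.castLE hMN)) V σ where
  left_orthonormal := transpose_submatrix_mul_submatrix_eq_one hU (Fin.castLE_injective hMN)
  right_orthonormal := hV
  nonneg := hσ
  eq_mul := by
    rw [hA]
    congr 1
    ext i j
    rw [mul_apply, mul_diagonal, Finset.sum_eq_single (Fin.castLE hMN j)]
    · simp [hS]
    · intro k _ hk
      have hkj : (k : ℕ) ≠ j := fun hkj => hk (Fin.ext hkj)
      rw [hS, if_neg hkj, mul_zero]
    · simp

variable {ι κ ρ ν : Type*} [Fintype ι] [Fintype κ] [Fintype ρ] [DecidableEq ρ]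
  {A : Matrix ι κ ℝ} {U : Matrix ι ρ ℝ} {V : Matrix κ ρ ℝ} {σ : ρ → ℝ} (h : IsThinSVD A U V σ)
include h

protected theorem transpose : IsThinSVD Aᵀ V U σ where
  left_orthonormal := h.right_orthonormal
  right_orthonormal := h.left_orthonormal
  nonneg := h.nonneg
  eq_mul := by simp [h.eq_mul, Matrix.mul_assoc]

theorem vnorm_mulVec (y : κ → ℝ) : vnorm (A *ᵥ y) = vnorm (diagonal σ *ᵥ (Vᵀ *ᵥ y)) := by
  rw [h.eq_mul, Matrix.mul_assoc, ← mulVec_mulVec,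
    vnorm_mulVec_of_transpose_mul_self h.left_orthonormal, mulVec_mulVec]

theorem specNorm_le [DecidableEq κ] {c : ℝ} (hc : 0 ≤ c) (hσ : ∀ i, σ i ≤ c) :
    specNorm A ≤ c := by
  refine _root_.specNorm_le hc fun y => ?_
  calc vnorm (A *ᵥ y) = vnorm (diagonal σ *ᵥ (Vᵀ *ᵥ y)) := h.vnorm_mulVec y
    _ ≤ vnorm (c • (Vᵀ *ᵥ y)) := vnorm_le_vnorm_of_abs_le fun i => by
        rw [mulVec_diagonal, Pi.smul_apply, smul_eq_mul, abs_mul, abs_mul,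
          abs_of_nonneg (h.nonneg i), abs_of_nonneg hc]
        gcongr
        exact hσ i
    _ = c * vnorm (Vᵀ *ᵥ y) := by rw [vnorm_smul, abs_of_nonneg hc]
    _ ≤ c * vnorm y := by gcongr; exact vnorm_transpose_mulVec_le h.right_orthonormal y

theorem le_specNorm [DecidableEq κ] (i : ρ) : σ i ≤ specNorm A := by
  have hsingle (c : ℝ) : vnorm (Pi.single i c : ρ → ℝ) = |c| := by
    simp [vnorm_eq_norm_toLp]
  have hAV := vnorm_mulVec_le A (V *ᵥ Pi.single i 1)
  rwa [vnorm_mulVec_of_transpose_mul_self h.right_orthonormal, h.vnorm_mulVec, mulVec_mulVec _ Vᵀ,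
    h.right_orthonormal, one_mulVec, diagonal_mulVec_single, hsingle, hsingle, mul_one, abs_one,
    mul_one, abs_of_nonneg (h.nonneg i)] at hAV

theorem le_vnorm_mulVec [DecidableEq κ] (hV : V * Vᵀ = 1) {f : ν → ρ} {c : ℝ} (hc : 0 ≤ c)
    (hσ : ∀ i ∉ Set.range f, c ≤ σ i) {y : κ → ℝ} (hy : (V.submatrix id f)ᵀ *ᵥ y = 0) :
    c * vnorm y ≤ vnorm (A *ᵥ y) := by
  calc c * vnorm y = vnorm (c • (Vᵀ *ᵥ y)) := by
        rw [vnorm_smul, abs_of_nonneg hc,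
          vnorm_mulVec_of_transpose_mul_self (by rw [transpose_transpose, hV])]
    _ ≤ vnorm (diagonal σ *ᵥ (Vᵀ *ᵥ y)) := vnorm_le_vnorm_of_abs_le fun i => ?_
    _ = vnorm (A *ᵥ y) := (h.vnorm_mulVec y).symm
  rw [mulVec_diagonal, Pi.smul_apply, smul_eq_mul, abs_mul, abs_mul, abs_of_nonneg (h.nonneg i),
    abs_of_nonneg hc]
  by_cases hi : i ∈ Set.range f
  · obtain ⟨k, rfl⟩ := hi
    have : (Vᵀ *ᵥ y) (f k) = 0 := congrFun hy k
    simp [this]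
  · gcongr
    exact hσ i hi

variable [DecidableEq ν] {f : ν → ρ}

theorem mul_submatrix [Fintype ν] :
    A * V.submatrix id f = U.submatrix id f * diagonal (σ ∘ f) := by
  have hAV : A * V = U * diagonal σ := by
    rw [h.eq_mul, Matrix.mul_assoc, h.right_orthonormal, Matrix.mul_one]
  ext i j
  rw [mul_diagonal]
  exact (congrFun₂ hAV i (f j)).trans (mul_diagonal ..)

theorem isSingularSubspacePair [Fintype ν] (hf : Function.Injective f) :
    IsSingularSubspacePair A (U.submatrix id f) (V.submatrix id f) := by
  have hU := transpose_submatrix_mul_submatrix_eq_one h.left_orthonormal hf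
  have hV := transpose_submatrix_mul_submatrix_eq_one h.right_orthonormal hf
  refine ⟨hU, hV, ?_, ?_⟩
  · rw [h.mul_submatrix, ← Matrix.mul_assoc (_ᵀ), hU, Matrix.one_mul]
  · rw [h.transpose.mul_submatrix, ← Matrix.mul_assoc (_ᵀ), hV, Matrix.one_mul]

theorem le_vnorm_deflated_mulVec [Fintype ν] [DecidableEq ι] [DecidableEq κ] (hV : V * Vᵀ = 1)
    (hf : Function.Injective f) {c : ℝ} (hc : IsLeast (σ '' (Set.range f)ᶜ) c)
    {Y : Matrix ι ν ℝ} {W : Matrix κ ν ℝ} (hY : Yᵀ * Y = 1) (hW : Wᵀ * W = 1) {y : κ → ℝ}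
    (hy : complProj W *ᵥ y = y) :
    (c - specNorm A * (sinAngle (U.submatrix id f) Y + sinAngle (V.submatrix id f) W) ^ 2) * vnorm y
      ≤ vnorm (deflated A Y W *ᵥ y) := by
  obtain ⟨⟨i, -, rfl⟩, hleast⟩ := hc
  exact (h.isSingularSubspacePair hf).le_vnorm_deflated_mulVec hY hW (h.nonneg i) (h.le_specNorm i)
    (fun _ hz => h.le_vnorm_mulVec hV (h.nonneg i) (fun _ hk => hleast ⟨_, hk, rfl⟩) hz) hy

end IsThinSVD

end SingularValues

section Chebyshev

open Polynomial

/-- The Chebyshev convergence rate of minimal residual polynomials on a positive interval whose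
endpoints have ratio `κ`. -/
noncomputable def chebyshevRate (κ : ℝ) : ℝ := 1 - 2 / (1 + √κ)

theorem chebyshevRate_one : chebyshevRate 1 = 0 := by norm_num [chebyshevRate]

theorem chebyshevRate_pos {κ : ℝ} (hκ : 1 < κ) : 0 < chebyshevRate κ := by
  have : 1 < √κ := Real.lt_sqrt_of_sq_lt (by simpa using hκ)
  rw [chebyshevRate, sub_pos, div_lt_one (by linarith)]
  linarith

theorem chebyshevRate_add_inv_div_two {κ : ℝ} (hκ : 1 < κ) :
    (chebyshevRate κ + (chebyshevRate κ)⁻¹) / 2 = (κ + 1) / (κ - 1) := by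
  have hs : 1 < √κ := Real.lt_sqrt_of_sq_lt (by simpa using hκ)
  have hsq : κ = √κ ^ 2 := (Real.sq_sqrt (by linarith)).symm
  have hrate : chebyshevRate κ = (√κ - 1) / (√κ + 1) := by
    rw [chebyshevRate]
    field_simp
    ring
  have h1 : √κ - 1 ≠ 0 := by linarith
  have h2 : √κ ^ 2 - 1 ≠ 0 := by nlinarith
  rw [hrate, hsq, Real.sqrt_sq (by linarith)]
  field_simp
  ring

theorem inv_pow_div_two_le_eval_T {θ : ℝ} (hθ : 0 < θ) (k : ℕ) :
    (θ ^ k)⁻¹ / 2 ≤ (Chebyshev.T ℝ k).eval ((θ + θ⁻¹) / 2) := by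
  rw [← Real.cosh_log hθ, Chebyshev.T_real_cosh, Int.cast_natCast, ← Real.log_pow,
    Real.cosh_log (pow_pos hθ k)]
  linarith [pow_pos hθ k]

/-- Rescaling `T_k` from `[-1, 1]` to `[α, β]` sends `0` to `(κ + 1) / (κ - 1)`, `κ = β / α`. -/
theorem exists_abs_eval_le_chebyshevRate_of_lt {α β : ℝ} (hα : 0 < α) (hαβ : α < β) (k : ℕ) :
    ∃ q : ℝ[X], q.natDegree ≤ k ∧ q.eval 0 = 1 ∧
      ∀ t ∈ Set.Icc α β, |q.eval t| ≤ 2 * chebyshevRate (β / α) ^ k := by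
  have hκ : 1 < β / α := (one_lt_div hα).2 hαβ
  have hrate := pow_pos (chebyshevRate_pos hκ) k
  have hsub : 0 < β - α := sub_pos.2 hαβ
  have hzero : (β / α + 1) / (β / α - 1) = (β + α) / (β - α) := by
    have : β / α - 1 ≠ 0 := by linarith
    field_simp
  set T := Chebyshev.T ℝ k
  set T₀ := T.eval ((β + α) / (β - α))
  have hT₀ : (chebyshevRate (β / α) ^ k)⁻¹ / 2 ≤ T₀ := by
    simpa only [chebyshevRate_add_inv_div_two hκ, hzero] using
      inv_pow_div_two_le_eval_T (chebyshevRate_pos hκ) k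
  have hT₀_pos : 0 < T₀ := lt_of_lt_of_le (by positivity) hT₀
  refine ⟨C T₀⁻¹ * T.comp (C ((β + α) / (β - α)) - C (2 / (β - α)) * X), ?_, ?_, fun t ht => ?_⟩
  · have hlin : (C ((β + α) / (β - α)) - C (2 / (β - α)) * X).natDegree ≤ 1 := by compute_degree
    refine (natDegree_C_mul_le _ _).trans (natDegree_comp_le.trans ?_)
    rw [Chebyshev.natDegree_T, Int.natAbs_natCast]
    exact (Nat.mul_le_mul_left k hlin).trans_eq (mul_one k)
  · simp [T₀, hT₀_pos.ne']
  · have hx : |(β + α) / (β - α) - 2 / (β - α) * t| ≤ 1 := by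
      rw [show (β + α) / (β - α) - 2 / (β - α) * t = (β + α - 2 * t) / (β - α) by ring, abs_div,
        abs_of_pos hsub, div_le_one hsub, abs_le]
      constructor <;> linarith [ht.1, ht.2]
    have hTt := Chebyshev.abs_eval_T_real_le_one k hx
    calc |eval t (C T₀⁻¹ * T.comp (C ((β + α) / (β - α)) - C (2 / (β - α)) * X))|
        = T₀⁻¹ * |T.eval ((β + α) / (β - α) - 2 / (β - α) * t)| := by
          simp [abs_mul, abs_of_pos hT₀_pos]
      _ ≤ T₀⁻¹ := mul_le_of_le_one_right (inv_pos.2 hT₀_pos).le hTt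
      _ ≤ ((chebyshevRate (β / α) ^ k)⁻¹ / 2)⁻¹ := inv_anti₀ (by positivity) hT₀
      _ = 2 * chebyshevRate (β / α) ^ k := by rw [inv_div, div_inv_eq_mul]

theorem exists_abs_eval_le_chebyshevRate {α β : ℝ} (hα : 0 < α) (hαβ : α ≤ β) (k : ℕ) :
    ∃ q : ℝ[X], q.natDegree ≤ k ∧ q.eval 0 = 1 ∧
      ∀ t ∈ Set.Icc α β, |q.eval t| ≤ 2 * chebyshevRate (β / α) ^ k := by
  rcases hαβ.lt_or_eq with hlt | rfl
  · exact exists_abs_eval_le_chebyshevRate_of_lt hα hlt k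
  refine ⟨(1 - C α⁻¹ * X) ^ k, ?_, by simp, fun t ht => ?_⟩
  · have hlin : (1 - C α⁻¹ * X : ℝ[X]).natDegree ≤ 1 := by compute_degree
    exact (natDegree_pow_le_of_le k hlin).trans_eq (mul_one k)
  · obtain rfl : t = α := by simpa using ht
    rw [div_self hα.ne', chebyshevRate_one]
    rcases k with _ | k <;> simp [hα.ne']

theorem exists_residual_polynomial {τ a b : ℝ} (hτ : 0 < τ) (ha : τ < a) (hab : a ≤ b)
    (n k : ℕ) : ∃ p : ℝ[X], p.natDegree ≤ n + 2 * k ∧ p.eval 0 = 1 ∧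
      (∀ μ, a ≤ |μ + τ| → |μ + τ| ≤ b → |p.eval μ| ≤
        2 * (b / τ) ^ n * chebyshevRate ((b ^ 2 - τ ^ 2) / (a ^ 2 - τ ^ 2)) ^ k) ∧
      (n ≠ 0 → p.eval (-τ) = 0) := by
  have hpos : 0 < a ^ 2 - τ ^ 2 := by nlinarith
  have hle : a ^ 2 - τ ^ 2 ≤ b ^ 2 - τ ^ 2 := by gcongr; linarith
  obtain ⟨q, hqdeg, hq0, hq⟩ := exists_abs_eval_le_chebyshevRate hpos hle k
  refine ⟨(C τ⁻¹ * X + 1) ^ n * q.comp (X ^ 2 + C (2 * τ) * X), ?_, by simp [hq0], ?_, ?_⟩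
  · have hlin : (C τ⁻¹ * X + 1 : ℝ[X]).natDegree ≤ 1 := by compute_degree
    have hquad : (X ^ 2 + C (2 * τ) * X : ℝ[X]).natDegree ≤ 2 := by compute_degree
    calc _ ≤ n * 1 + q.natDegree * (X ^ 2 + C (2 * τ) * X : ℝ[X]).natDegree :=
          natDegree_mul_le_of_le (natDegree_pow_le_of_le n hlin) natDegree_comp_le
      _ ≤ n * 1 + k * 2 := by gcongr
      _ = n + 2 * k := by ring
  · intro μ hμa hμb
    have hsq : μ ^ 2 + 2 * τ * μ = |μ + τ| ^ 2 - τ ^ 2 := by rw [sq_abs]; ring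
    have hmem : μ ^ 2 + 2 * τ * μ ∈ Set.Icc (a ^ 2 - τ ^ 2) (b ^ 2 - τ ^ 2) := by
      rw [hsq]
      constructor <;> gcongr
      linarith
    have hlin : |τ⁻¹ * μ + 1| ≤ b / τ := by
      rw [show τ⁻¹ * μ + 1 = (μ + τ) / τ by field_simp, abs_div, abs_of_pos hτ]
      gcongr
    have hb : 0 ≤ b / τ := (abs_nonneg _).trans hlin
    calc _ = |τ⁻¹ * μ + 1| ^ n * |q.eval (μ ^ 2 + 2 * τ * μ)| := by simp [abs_mul, abs_pow]
      _ ≤ (b / τ) ^ n * (2 * chebyshevRate ((b ^ 2 - τ ^ 2) / (a ^ 2 - τ ^ 2)) ^ k) := by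
          gcongr
          exact hq _ hmem
      _ = _ := by ring
  · intro hn
    simp [hτ.ne', hn]

end Chebyshev

section Minres

open Polynomial

variable {ι : Type*} [Fintype ι] [DecidableEq ι] {C : Matrix ι ι ℝ}

theorem aeval_mulVec_mem_Krylov (C : Matrix ι ι ℝ) (r : ι → ℝ) {p : ℝ[X]} {j : ℕ}
    (hp : ∀ i, p.coeff i ≠ 0 → i < j) : aeval C p *ᵥ r ∈ Krylov C r j := by
  rw [aeval_eq_sum_range, sum_mulVec]
  refine Submodule.sum_mem _ fun i _ => ?_
  rw [smul_mulVec]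
  by_cases hi : p.coeff i = 0
  · simp [hi]
  · exact Submodule.smul_mem _ _ (Submodule.subset_span ⟨i, hp i hi, rfl⟩)

theorem exists_mem_Krylov_mulVec_add_eq_aeval (C : Matrix ι ι ℝ) (r : ι → ℝ) {p : ℝ[X]} {j : ℕ}
    (hdeg : p.natDegree ≤ j) (hp : p.eval 0 = 1) :
    ∃ w ∈ Krylov C r j, C *ᵥ w + r = aeval C p *ᵥ r := by
  refine ⟨aeval C p.divX *ᵥ r, aeval_mulVec_mem_Krylov C r fun i hi => ?_, ?_⟩
  · rw [coeff_divX] at hi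
    exact (le_natDegree_of_ne_zero hi).trans hdeg
  · have hdivX : p = X * p.divX + 1 := by
      rw [← C_1, ← hp, ← coeff_zero_eq_eval_zero, X_mul_divX_add]
    nth_rw 2 [hdivX]
    simp [add_mulVec, mulVec_mulVec]

theorem dotProduct_aeval_mulVec (hC : Cᵀ = C) {v : ι → ℝ} {μ : ℝ} (hv : C *ᵥ v = μ • v) (p : ℝ[X])
    (r : ι → ℝ) : v ⬝ᵥ (aeval C p *ᵥ r) = p.eval μ * (v ⬝ᵥ r) := by
  induction p using Polynomial.induction_on' with
  | add p q hp hq => simp [add_mulVec, dotProduct_add, hp, hq, add_mul]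
  | monomial n a =>
    have hpow : v ⬝ᵥ (C ^ n *ᵥ r) = μ ^ n * (v ⬝ᵥ r) := by
      induction n with
      | zero => simp
      | succ n ih =>
        rw [pow_succ', ← mulVec_mulVec, dotProduct_mulVec, ← mulVec_transpose, hC, hv,
          smul_dotProduct, ih, smul_eq_mul, pow_succ', mul_assoc]
    rw [aeval_monomial, eval_monomial, ← Algebra.smul_def, smul_mulVec, dotProduct_smul, hpow,
      smul_eq_mul, mul_assoc]

theorem vnorm_aeval_mulVec_le (hC : Cᵀ = C) (p : ℝ[X]) (r : ι → ℝ) {K : ℝ} (hK : 0 ≤ K)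
    (h : ∀ v μ, C *ᵥ v = μ • v → v ⬝ᵥ r ≠ 0 → |p.eval μ| ≤ K) :
    vnorm (aeval C p *ᵥ r) ≤ K * vnorm r := by
  have hherm : C.IsHermitian := (conjTranspose_eq_transpose_of_trivial C).trans hC
  let b := hherm.eigenvectorBasis
  have hparseval (x : ι → ℝ) : vnorm x ^ 2 = ∑ i, ((b i : ι → ℝ) ⬝ᵥ x) ^ 2 := by
    rw [vnorm_eq_norm_toLp, ← b.sum_sq_norm_inner_right]
    refine Finset.sum_congr rfl fun i _ => ?_
    rw [Real.norm_eq_abs, sq_abs, EuclideanSpace.inner_eq_star_dotProduct]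
    simp [dotProduct_comm]
  refine le_of_sq_le_sq ?_ (mul_nonneg hK (vnorm_nonneg r))
  rw [mul_pow, hparseval, hparseval, Finset.mul_sum]
  refine Finset.sum_le_sum fun i _ => ?_
  have hv : C *ᵥ (b i : ι → ℝ) = hherm.eigenvalues i • (b i : ι → ℝ) :=
    hherm.mulVec_eigenvectorBasis i
  rw [dotProduct_aeval_mulVec hC hv, mul_pow]
  rcases eq_or_ne ((b i : ι → ℝ) ⬝ᵥ r) 0 with h0 | h0
  · simp [h0]
  · gcongr ?_ * _
    exact sq_le_sq.2 ((h _ _ hv h0).trans_eq (abs_of_nonneg hK).symm)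

theorem exists_mem_Krylov_vnorm_le (hC : Cᵀ = C) (r : ι → ℝ) {τ a b : ℝ} (hτ : 0 < τ) (ha : τ < a)
    (hab : a ≤ b) {n j : ℕ} (hnj : n ≤ j)
    (heig : ∀ v μ, C *ᵥ v = μ • v → v ⬝ᵥ r ≠ 0 →
      (a ≤ |μ + τ| ∧ |μ + τ| ≤ b) ∨ (μ + τ = 0 ∧ n ≠ 0)) :
    ∃ w ∈ Krylov C r j, vnorm (C *ᵥ w + r) ≤ 2 * (b / τ) ^ n *
      chebyshevRate ((b ^ 2 - τ ^ 2) / (a ^ 2 - τ ^ 2)) ^ ((j - n) / 2) * vnorm r := by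
  obtain ⟨p, hdeg, hp0, hp, hp_neg⟩ := exists_residual_polynomial hτ ha hab n ((j - n) / 2)
  obtain ⟨w, hw, hres⟩ := exists_mem_Krylov_mulVec_add_eq_aeval C r (j := j) (by omega) hp0
  have hmem : a ≤ |(a - τ) + τ| ∧ |(a - τ) + τ| ≤ b := by
    rw [sub_add_cancel, abs_of_pos (hτ.trans ha)]
    exact ⟨le_rfl, hab⟩
  have hbound_nonneg := (abs_nonneg _).trans (hp _ hmem.1 hmem.2)
  refine ⟨w, hw, hres ▸ vnorm_aeval_mulVec_le hC p r hbound_nonneg fun v μ hv hvr => ?_⟩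
  rcases heig v μ hv hvr with ⟨hμa, hμb⟩ | ⟨hμ, hn⟩
  · exact hp μ hμa hμb
  · rwa [eq_neg_of_add_eq_zero_left hμ, hp_neg hn, abs_zero]

end Minres

section SingularTriples

variable {ι κ : Type*} [Fintype ι] [Fintype κ]

/-- The vectors `x` and `y`, not both zero, are left and right singular vectors of `T` for the
signed singular value `l`; equivalently, `(x, y)` is an eigenvector of the symmetric matrix with
zero diagonal blocks and off-diagonal blocks `T` and `Tᵀ`. -/
structure IsSingularTriple (T : Matrix ι κ ℝ) (l : ℝ) (x : ι → ℝ) (y : κ → ℝ) : Prop where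
  mulVec_right : T *ᵥ y = l • x
  transpose_mulVec_left : Tᵀ *ᵥ x = l • y
  ne_zero : x ≠ 0 ∨ y ≠ 0

namespace IsSingularTriple

variable {T : Matrix ι κ ℝ} {l : ℝ} {x : ι → ℝ} {y : κ → ℝ} (h : IsSingularTriple T l x y)
include h

theorem vnorm_eq (hl : l ≠ 0) : vnorm x = vnorm y := by
  have hxy : l * vnorm x ^ 2 = l * vnorm y ^ 2 := by
    rw [vnorm_sq, vnorm_sq, ← smul_eq_mul, ← dotProduct_smul, ← h.mulVec_right, ← smul_eq_mul,
      ← dotProduct_smul, ← h.transpose_mulVec_left, dotProduct_transpose_mulVec]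
  exact (sq_eq_sq₀ (vnorm_nonneg x) (vnorm_nonneg y)).1 (mul_left_cancel₀ hl hxy)

theorem vnorm_right_pos (hl : l ≠ 0) : 0 < vnorm y := by
  rcases h.ne_zero with hx | hy
  · exact h.vnorm_eq hl ▸ vnorm_pos.2 hx
  · exact vnorm_pos.2 hy

theorem vnorm_mulVec_right (hl : l ≠ 0) : vnorm (T *ᵥ y) = |l| * vnorm y := by
  rw [h.mulVec_right, vnorm_smul, h.vnorm_eq hl]

theorem abs_le_specNorm [DecidableEq κ] : |l| ≤ specNorm T := by
  rcases eq_or_ne l 0 with rfl | hl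
  · simpa using specNorm_nonneg T
  · refine le_of_mul_le_mul_right ?_ (h.vnorm_right_pos hl)
    rw [← h.vnorm_mulVec_right hl]
    exact vnorm_mulVec_le T y

variable {a : ℝ}

theorem le_abs (hl : l ≠ 0) (hy : a * vnorm y ≤ vnorm (T *ᵥ y)) : a ≤ |l| :=
  le_of_mul_le_mul_right (hy.trans_eq (h.vnorm_mulVec_right hl)) (h.vnorm_right_pos hl)

theorem ne_zero_of_bounded_below (ha : 0 < a) (hx : a * vnorm x ≤ vnorm (Tᵀ *ᵥ x))
    (hy : a * vnorm y ≤ vnorm (T *ᵥ y)) : l ≠ 0 := by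
  rintro rfl
  rw [h.transpose_mulVec_left, zero_smul, vnorm_zero] at hx
  rw [h.mulVec_right, zero_smul, vnorm_zero] at hy
  rcases h.ne_zero with h0 | h0
  · exact hx.not_gt (mul_pos ha (vnorm_pos.2 h0))
  · exact hy.not_gt (mul_pos ha (vnorm_pos.2 h0))

end IsSingularTriple

end SingularTriples

section Correction

variable {ι κ ν : Type*} [Fintype ι] [Fintype κ] [Fintype ν] [DecidableEq ι] [DecidableEq κ]

/-- The paper's projector `Π̃_m`, for `Y = Ũ_m` and `W = Ṽ_m`. -/
def blockProj (Y : Matrix ι ν ℝ) (W : Matrix κ ν ℝ) : Matrix (ι ⊕ κ) (ι ⊕ κ) ℝ :=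
  fromBlocks (complProj Y) 0 0 (complProj W)

/-- The coefficient matrix `B̃_m` of the preconditioned JDSVD correction equation with target `τ`
and approximate singular subspaces spanned by the columns of `Y` and `W`. -/
def correctionMatrix (A : Matrix ι κ ℝ) (Y : Matrix ι ν ℝ) (W : Matrix κ ν ℝ) (τ : ℝ) :
    Matrix (ι ⊕ κ) (ι ⊕ κ) ℝ :=
  blockProj Y W * fromBlocks ((-τ) • 1) A Aᵀ ((-τ) • 1) * blockProj Y W

variable {A : Matrix ι κ ℝ} {Y : Matrix ι ν ℝ} {W : Matrix κ ν ℝ} {τ : ℝ}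

omit [Fintype ι] [Fintype κ] in
theorem blockProj_transpose : (blockProj Y W)ᵀ = blockProj Y W := by
  simp [blockProj, fromBlocks_transpose]

theorem correctionMatrix_transpose :
    (correctionMatrix A Y W τ)ᵀ = correctionMatrix A Y W τ := by
  simp [correctionMatrix, blockProj_transpose, fromBlocks_transpose, Matrix.mul_assoc]

variable [DecidableEq ν] (hY : Yᵀ * Y = 1) (hW : Wᵀ * W = 1)
include hY hW

theorem blockProj_mul_self : blockProj Y W * blockProj Y W = blockProj Y W := by
  simp [blockProj, fromBlocks_multiply, complProj_mul_self hY, complProj_mul_self hW]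

theorem correctionMatrix_eq_fromBlocks : correctionMatrix A Y W τ =
    fromBlocks ((-τ) • complProj Y) (deflated A Y W) (deflated A Y W)ᵀ ((-τ) • complProj W) := by
  simp [correctionMatrix, blockProj, fromBlocks_multiply, deflated, complProj_mul_self hY,
    complProj_mul_self hW, Matrix.mul_assoc]

theorem isSingularTriple_of_correctionMatrix_mulVec {x : ι → ℝ} {y : κ → ℝ} {μ : ℝ}
    (hx : complProj Y *ᵥ x = x) (hy : complProj W *ᵥ y = y) (hne : Sum.elim x y ≠ 0)
    (h : correctionMatrix A Y W τ *ᵥ Sum.elim x y = μ • Sum.elim x y) :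
    IsSingularTriple (deflated A Y W) (μ + τ) x y := by
  simp only [correctionMatrix_eq_fromBlocks hY hW, fromBlocks_mulVec, Sum.elim_comp_inl,
    Sum.elim_comp_inr, smul_mulVec, hx, hy] at h
  have hleft : (-τ) • x + deflated A Y W *ᵥ y = μ • x := congrArg (· ∘ Sum.inl) h
  have hright : (deflated A Y W)ᵀ *ᵥ x + (-τ) • y = μ • y := congrArg (· ∘ Sum.inr) h
  refine ⟨?_, ?_, ?_⟩
  · rw [add_smul, ← hleft]
    module
  · rw [add_smul, ← hright]
    module
  · contrapose! hne
    rw [hne.1, hne.2, Sum.elim_zero_zero]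

theorem exists_isSingularTriple_of_mulVec_eq_smul {r v : ι ⊕ κ → ℝ} {μ : ℝ}
    (hr : blockProj Y W *ᵥ r = r) (hvr : v ⬝ᵥ r ≠ 0)
    (hv : correctionMatrix A Y W τ *ᵥ v = μ • v) :
    ∃ x y, complProj Y *ᵥ x = x ∧ complProj W *ᵥ y = y ∧
      IsSingularTriple (deflated A Y W) (μ + τ) x y := by
  have hPP := blockProj_mul_self hY hW
  set u := blockProj Y W *ᵥ v with hu
  have hPu : blockProj Y W *ᵥ u = u := by rw [hu, mulVec_mulVec, hPP]
  have hu0 : u ≠ 0 := fun h0 => hvr <| by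
    rw [← hr, dotProduct_mulVec, ← mulVec_transpose, blockProj_transpose, ← hu, h0, zero_dotProduct]
  have hCu : correctionMatrix A Y W τ *ᵥ u = μ • u := by
    have hcomm : correctionMatrix A Y W τ * blockProj Y W
        = blockProj Y W * correctionMatrix A Y W τ := by
      simp only [correctionMatrix, Matrix.mul_assoc, hPP]
      simp only [← Matrix.mul_assoc, hPP]
    rw [hu, mulVec_mulVec, hcomm, ← mulVec_mulVec, hv, mulVec_smul]
  obtain ⟨x, y, hxy⟩ : ∃ x y, u = Sum.elim x y := ⟨_, _, (Sum.elim_comp_inl_inr u).symm⟩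
  rw [hxy] at hPu hCu hu0
  obtain ⟨hx, hy⟩ : complProj Y *ᵥ x = x ∧ complProj W *ᵥ y = y := by
    simpa [blockProj, fromBlocks_mulVec, Sum.elim_eq_iff] using hPu
  exact ⟨x, y, hx, hy, isSingularTriple_of_correctionMatrix_mulVec hY hW hx hy hu0 hCu⟩

end Correction

section Bound

variable {ι κ ν : Type*} [Fintype ι] [Fintype κ] [Fintype ν]
  [DecidableEq ι] [DecidableEq κ] [DecidableEq ν]
  {A U : Matrix ι κ ℝ} {V : Matrix κ κ ℝ} {σ : κ → ℝ} {f : ν → κ}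
  {σmax σrest δ τ : ℝ} {Y : Matrix ι ν ℝ} {W : Matrix κ ν ℝ}

theorem IsThinSVD.le_vnorm_deflated_transpose_mulVec (h : IsThinSVD A U V σ)
    (hcard : Fintype.card ι = Fintype.card κ) (hf : Function.Injective f)
    (hσrest : IsLeast (σ '' (Set.range f)ᶜ) σrest) (hY : Yᵀ * Y = 1) (hW : Wᵀ * W = 1) {x : ι → ℝ}
    (hx : complProj Y *ᵥ x = x) :
    (σrest - specNorm A * (sinAngle (U.submatrix id f) Y + sinAngle (V.submatrix id f) W) ^ 2)
      * vnorm x ≤ vnorm ((deflated A Y W)ᵀ *ᵥ x) := by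
  have hU : U * Uᵀ = 1 := (mul_eq_one_comm_of_card_eq _ _ _ hcard).2 h.left_orthonormal
  rw [deflated_transpose, ← specNorm_transpose A, add_comm (sinAngle _ Y)]
  exact h.transpose.le_vnorm_deflated_mulVec hU hf hσrest hW hY hx

theorem eigenvalue_correctionMatrix_bounds (h : IsThinSVD A U V σ)
    (hσmax : σmax ∈ upperBounds (Set.range σ)) (hf : Function.Injective f)
    (hσrest : IsLeast (σ '' (Set.range f)ᶜ) σrest) (hY : Yᵀ * Y = 1) (hW : Wᵀ * W = 1)
    (hδ : δ = specNorm A * (sinAngle (U.submatrix id f) Y + sinAngle (V.submatrix id f) W) ^ 2)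
    (hδσ : δ < σrest) {r v : ι ⊕ κ → ℝ} {μ : ℝ} (hr : blockProj Y W *ᵥ r = r) (hvr : v ⬝ᵥ r ≠ 0)
    (hv : correctionMatrix A Y W τ *ᵥ v = μ • v) :
    (σrest - δ ≤ |μ + τ| ∧ |μ + τ| ≤ σmax) ∨
      (μ + τ = 0 ∧ Fintype.card ι ≠ Fintype.card κ) := by
  obtain ⟨x, y, hx, hy, hxy⟩ := exists_isSingularTriple_of_mulVec_eq_smul hY hW hr hvr hv
  have hV : V * Vᵀ = 1 := mul_eq_one_comm.1 h.right_orthonormal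
  have hTy := h.le_vnorm_deflated_mulVec hV hf hσrest hY hW hy
  rw [← hδ] at hTy
  rcases eq_or_ne (μ + τ) 0 with hl | hl
  · refine Or.inr ⟨hl, fun hcard => ?_⟩
    have hTx := h.le_vnorm_deflated_transpose_mulVec hcard hf hσrest hY hW hx
    rw [← hδ] at hTx
    exact hxy.ne_zero_of_bounded_below (sub_pos.2 hδσ) hTx hTy hl
  · obtain ⟨i, -, -⟩ := hσrest.1
    have hσmax0 : 0 ≤ σmax := (h.nonneg i).trans (hσmax ⟨i, rfl⟩)
    exact Or.inl ⟨hxy.le_abs hl hTy, hxy.abs_le_specNorm.trans <|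
      (specNorm_deflated_le A hY hW).trans (h.specNorm_le hσmax0 fun i => hσmax ⟨i, rfl⟩)⟩

/-- `f` enumerates the deflated singular triplets of `A`. -/
theorem minres_bound_precond_approx_smallest_general (h : IsThinSVD A U V σ) (hτ : 0 < τ)
    (hσmax : IsGreatest (Set.range σ) σmax) (hf : Function.Injective f)
    (hσrest : IsLeast (σ '' (Set.range f)ᶜ) σrest) (hY : Yᵀ * Y = 1) (hW : Wᵀ * W = 1)
    (hδ : δ = specNorm A * (sinAngle (U.submatrix id f) Y + sinAngle (V.submatrix id f) W) ^ 2)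
    (hδ_lt : δ < σrest - τ) {r : ι ⊕ κ → ℝ} (hr : blockProj Y W *ᵥ r = r) {j : ℕ}
    (hj : min 1 (Fintype.card ι - Fintype.card κ) ≤ j) :
    ∃ w ∈ Krylov (correctionMatrix A Y W τ) r j, vnorm (correctionMatrix A Y W τ *ᵥ w + r) ≤
      2 * ((σmax + δ) / τ) ^ min 1 (Fintype.card ι - Fintype.card κ) *
        chebyshevRate (((σmax + δ) ^ 2 - τ ^ 2) / ((σrest - δ) ^ 2 - τ ^ 2)) ^
          ((j - min 1 (Fintype.card ι - Fintype.card κ)) / 2) * vnorm r := by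
  have hδ0 : 0 ≤ δ := hδ ▸ mul_nonneg (specNorm_nonneg A) (sq_nonneg _)
  have hrest_le : σrest ≤ σmax := hσmax.2 (Set.image_subset_range _ _ hσrest.1)
  have hcard := card_le_card_of_transpose_mul_self h.left_orthonormal
  refine exists_mem_Krylov_vnorm_le correctionMatrix_transpose r hτ (by linarith) (by linarith) hj
    fun v μ hv hvr => ?_
  rcases eigenvalue_correctionMatrix_bounds h hσmax.2 hf hσrest hY hW hδ (by linarith) hr hvr hv
    with ⟨hlow, hup⟩ | ⟨hzero, hne⟩
  · exact Or.inl ⟨hlow, by linarith⟩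
  · exact Or.inr ⟨hzero, by omega⟩

end Bound

/-- Theorem 4.4(ii). MINRES bound for the preconditioned JDSVD correction
equation with approximate singular subspaces, in the case
`σ_min ≤ τ < (σ_min + σ_min,m+1)/2`. -/
theorem minres_bound_precond_approx_smallest {M N m : ℕ} (hN : 2 ≤ N) (hMN : N ≤ M)
    (hm : 1 ≤ m) (hmN : m < N)
    (A : Matrix (Fin M) (Fin N) ℝ)
    (U : Matrix (Fin M) (Fin M) ℝ) (V : Matrix (Fin N) (Fin N) ℝ)
    (hU : Uᵀ * U = 1) (hV : Vᵀ * V = 1)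
    (σ : Fin N → ℝ) (hσ : ∀ i, 0 ≤ σ i)
    (S : Matrix (Fin M) (Fin N) ℝ)
    (hS : ∀ i j, S i j = if (i : ℕ) = (j : ℕ) then σ j else 0)
    (hA : A = U * S * Vᵀ)
    (τ : ℝ) (hτ0 : 0 < τ)
    (hclosest : ∀ i j : Fin N, (i : ℕ) < m → m ≤ (j : ℕ) → |σ i - τ| ≤ |σ j - τ|)
    (σmax σmin σminm1 : ℝ)
    (hσmax : IsGreatest (Set.range σ) σmax)
    (hσmin : IsLeast (Set.range σ) σmin)
    (hσminm1 : IsLeast (σ '' {i : Fin N | m ≤ (i : ℕ)}) σminm1)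
    (hτ1 : σmin ≤ τ) (hτ2 : τ < (σmin + σminm1) / 2)
    (Um : Matrix (Fin M) (Fin m) ℝ)
    (hUm : ∀ i j, Um i j = U i ⟨(j : ℕ), by have := j.isLt; omega⟩)
    (Vm : Matrix (Fin N) (Fin m) ℝ)
    (hVm : ∀ i j, Vm i j = V i ⟨(j : ℕ), by have := j.isLt; omega⟩)
    (Ut : Matrix (Fin M) (Fin m) ℝ) (Vt : Matrix (Fin N) (Fin m) ℝ)
    (hUt : Utᵀ * Ut = 1) (hVt : Vtᵀ * Vt = 1)
    (δ : ℝ)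
    (hδ : δ = specNorm A *
      (specNorm ((1 - Ut * Utᵀ) * Um) + specNorm ((1 - Vt * Vtᵀ) * Vm)) ^ 2)
    (hδsmall : δ < σminm1 - τ)
    (B P Bm : Matrix (Fin M ⊕ Fin N) (Fin M ⊕ Fin N) ℝ)
    (hB : B = Matrix.fromBlocks ((-τ) • 1) A Aᵀ ((-τ) • 1))
    (hP : P = Matrix.fromBlocks (1 - Ut * Utᵀ) 0 0 (1 - Vt * Vtᵀ))
    (hBm : Bm = P * B * P)
    (r : Fin M ⊕ Fin N → ℝ) (hr : P *ᵥ r = r) :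
    ∀ j : ℕ, min 1 (M - N) ≤ j → ∃ w ∈ Krylov Bm r j,
      vnorm (Bm *ᵥ w + r) ≤
        2 * ((σmax + δ) / τ) ^ (min 1 (M - N)) *
          (1 - 2 / (1 + Real.sqrt (((σmax + δ) ^ 2 - τ ^ 2) / ((σminm1 - δ) ^ 2 - τ ^ 2)))) ^
            ((j - min 1 (M - N)) / 2) * vnorm r := by
  intro j hj
  subst hB hP hBm
  obtain rfl : Um = (U.submatrix id (Fin.castLE hMN)).submatrix id (Fin.castLE hmN.le) := ext hUm
  obtain rfl : Vm = V.submatrix id (Fin.castLE hmN.le) := ext hVm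
  have hrange : (Set.range (Fin.castLE hmN.le))ᶜ = {i : Fin N | m ≤ (i : ℕ)} := by
    ext i
    simp [Fin.range_castLE]
  rw [← hrange] at hσminm1
  have hbound := minres_bound_precond_approx_smallest_general (.of_svd hMN hU hV hσ hS hA) hτ0
    hσmax (Fin.castLE_injective hmN.le) hσminm1 hUt hVt hδ hδsmall hr (j := j)
  simp only [Fintype.card_fin] at hbound
  exact hbound hj
end
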